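/- arXiv:2005.08166 — 3 statements merged into one kernel-verified Lean document; each statement's English description precedes it below -/
import Mathlib

section
/- Let 𝔤 ⊆ co(1,n+1)_{ℝp} be a subalgebra that is a Berger algebra (with respect to its action on ℝ^{1,n+1}), and let 𝔥 := pr_{so(n)}𝔤 ⊆ so(n) be its projection to the so(n)-component, i.e. 𝔥 = {A : (b,a,A,X) ∈ 𝔤 for some b,a,X}. Then 𝔥 is spanned by the set {S(U,V) : S ∈ ℛ(𝔥), U,V ∈ ℝⁿ} ∪ {P(U) : P ∈ 𝒫(𝔥), U ∈ ℝⁿ}; in particular 𝔥 is a weak Berger algebra (equivalently, by Leistner's theorem, the holonomy algebra of a Riemannian manifold). -/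
/-!
Write `(b, a, A, X)` for the components of the values of a curvature tensor `R` of type
`co(1,n+1)_{ℝp}`. Evaluated on `p`, `q` and vectors of `ℝⁿ`, the Bianchi identity gives
`b(U,V) = (A(p,q)U, V)`, and the cyclic sum of `(A(v,U)V, W)` then turns out to be minus that of
`(v,U)(A(p,q)V, W)`. Hence `U ↦ A(v,U) + (v,U)·A(p,q)` is a weak curvature tensor for every vector
`v` of Minkowski space. At a unit vector `v = U ∈ ℝⁿ` its value is `A(p,q)`; so `A(p,q)`, then
every `A(v,U)`, and finally every `A(v,w)` lies in the span of the values of weak curvature tensors.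
-/

open Module

noncomputable section

namespace Weyl

variable {V : Type*} [AddCommGroup V] [Module ℝ V]

/-- The endomorphism `X ∧ Y : Z ↦ B(X,Z)•Y − B(Y,Z)•X`. -/
def wedge (B : LinearMap.BilinForm ℝ V) (X Y : V) : Module.End ℝ V where
  toFun Z := B X Z • Y - B Y Z • X
  map_add' z z' := by simp only [map_add, add_smul]; abel
  map_smul' c z := by simp only [map_smul, smul_eq_mul, RingHom.id_apply, mul_smul, smul_sub]

/-- The Lie algebra `so(B)` of endomorphisms skew-symmetric with respect to `B`. -/
def soSet (B : LinearMap.BilinForm ℝ V) : Set (Module.End ℝ V) :=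
  {A | ∀ x y, B (A x) y + B x (A y) = 0}

/-- The conformal Lie algebra `co(B) = ℝ·id ⊕ so(B)`. -/
def coSet (B : LinearMap.BilinForm ℝ V) : Set (Module.End ℝ V) :=
  {F | ∃ c : ℝ, ∃ S ∈ soSet B, F = c • (1 : Module.End ℝ V) + S}

/-- The first prolongation `g^{(1)}` of a set of endomorphisms:
linear maps `φ : V → g` with `φ(X)Y = φ(Y)X`. -/
def firstProlong (g : Set (Module.End ℝ V)) : Set (V →ₗ[ℝ] Module.End ℝ V) :=
  {φ | (∀ x, φ x ∈ g) ∧ ∀ x y, φ x y = φ y x}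

/-- `R` is an algebraic curvature tensor of type `g` (a linear map on `Λ²V`,
encoded as an antisymmetric bilinear map, with values in `g`, satisfying the
Bianchi identity). -/
def IsCurv (g : Set (Module.End ℝ V)) (R : V →ₗ[ℝ] V →ₗ[ℝ] Module.End ℝ V) : Prop :=
  (∀ x y, R x y = - R y x) ∧ (∀ x y, R x y ∈ g) ∧
    ∀ x y z, R x y z + R y z x + R z x y = 0

/-- `L(ℛ(g))`: the span of all values of algebraic curvature tensors of type `g`. -/
def curvSpan (g : Set (Module.End ℝ V)) : Submodule ℝ (Module.End ℝ V) :=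
  Submodule.span ℝ {F | ∃ R, IsCurv g R ∧ ∃ x y, F = R x y}

/-- `g` is a Berger algebra: `L(ℛ(g)) = g`. -/
def IsBerger (g : Set (Module.End ℝ V)) : Prop :=
  (curvSpan g : Set (Module.End ℝ V)) = g

/-- `g` is (the underlying set of) a Lie subalgebra of `gl(V)`. -/
def IsLieSub (g : Set (Module.End ℝ V)) : Prop :=
  (0 : Module.End ℝ V) ∈ g ∧ (∀ F ∈ g, ∀ F' ∈ g, F + F' ∈ g) ∧
    (∀ (c : ℝ), ∀ F ∈ g, c • F ∈ g) ∧ ∀ F ∈ g, ∀ F' ∈ g, F * F' - F' * F ∈ g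

/-- The subspace `W` is invariant under every element of `g`. -/
def Invariant (g : Set (Module.End ℝ V)) (W : Submodule ℝ V) : Prop :=
  ∀ F ∈ g, ∀ x ∈ W, F x ∈ W

/-- The restriction of `B` to `W` is nondegenerate. -/
def IsNondegOn (B : LinearMap.BilinForm ℝ V) (W : Submodule ℝ V) : Prop :=
  ∀ x ∈ W, (∀ y ∈ W, B x y = 0) → x = 0

/-- Weak irreducibility: no proper nonzero invariant nondegenerate subspace. -/
def WeaklyIrred (B : LinearMap.BilinForm ℝ V) (g : Set (Module.End ℝ V)) : Prop :=
  ∀ W : Submodule ℝ V, Invariant g W → IsNondegOn B W → W = ⊥ ∨ W = ⊤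

/-- Irreducibility: no proper nonzero invariant subspace. -/
def Irred (g : Set (Module.End ℝ V)) : Prop :=
  ∀ W : Submodule ℝ V, Invariant g W → W = ⊥ ∨ W = ⊤

/-- The Euclidean dot product on `Fin n → ℝ`. -/
def dotE (n : ℕ) : LinearMap.BilinForm ℝ (Fin n → ℝ) :=
  LinearMap.mk₂ ℝ (fun x y => ∑ i, x i * y i)
    (fun x x' y => by simp [add_mul, Finset.sum_add_distrib])
    (fun c x y => by simp [Finset.mul_sum, mul_assoc])
    (fun x y y' => by simp [mul_add, Finset.sum_add_distrib])
    (fun c x y => by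
      simp only [Pi.smul_apply, smul_eq_mul, Finset.mul_sum]
      exact Finset.sum_congr rfl fun i _ => by ring)

/-- Minkowski space `ℝ^{1,n+1}` in Witt coordinates: the vector `(v, x, u)`
represents `v·p + x + u·q` with respect to a Witt basis `p, e₁, …, eₙ, q`. -/
abbrev Mink (n : ℕ) := ℝ × (Fin n → ℝ) × ℝ

/-- The Minkowski metric in Witt coordinates: `p, q` are isotropic, `(p,q) = 1`,
and the form is the Euclidean one on the `ℝⁿ`-part orthogonal to `p` and `q`. -/
def minkB (n : ℕ) : LinearMap.BilinForm ℝ (Mink n) :=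
  LinearMap.mk₂ ℝ (fun X Y => X.1 * Y.2.2 + X.2.2 * Y.1 + dotE n X.2.1 Y.2.1)
    (fun X X' Y => by
      simp only [Prod.fst_add, Prod.snd_add, Pi.add_apply, map_add,
        LinearMap.add_apply]
      ring)
    (fun c X Y => by
      simp only [Prod.smul_fst, Prod.smul_snd, smul_eq_mul, map_smul,
        LinearMap.smul_apply]
      ring)
    (fun X Y Y' => by
      simp only [Prod.fst_add, Prod.snd_add, Pi.add_apply, map_add,
        LinearMap.add_apply]
      ring)
    (fun c X Y => by
      simp only [Prod.smul_fst, Prod.smul_snd, smul_eq_mul, map_smul,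
        LinearMap.smul_apply]
      ring)

/-- The Witt basis vector `p`. -/
def pvec (n : ℕ) : Mink n := (1, 0, 0)

/-- The Witt basis vector `q`. -/
def qvec (n : ℕ) : Mink n := (0, 0, 1)

/-- The embedding of `ℝⁿ` into Minkowski space. -/
def emb {n : ℕ} (x : Fin n → ℝ) : Mink n := (0, x, 0)

/-- The element `(b, a, A, X) = b·id + (a, A, X)` of `co(1,n+1)_{ℝp}`:
it maps `p ↦ (a+b)·p`, `U ↦ (X,U)·p + A U + b·U` for `U ∈ ℝⁿ`, and
`q ↦ −X + (b−a)·q`. -/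
def coElem {n : ℕ} (b a : ℝ) (A : Module.End ℝ (Fin n → ℝ)) (X : Fin n → ℝ) :
    Module.End ℝ (Mink n) where
  toFun w := ((b + a) * w.1 + dotE n X w.2.1,
              b • w.2.1 + A w.2.1 - w.2.2 • X,
              (b - a) * w.2.2)
  map_add' w w' := by
    simp only [Prod.fst_add, Prod.snd_add, map_add, Prod.mk_add_mk, add_smul]
    refine Prod.ext (by ring) (Prod.ext ?_ (by ring))
    simp only [smul_add]
    abel
  map_smul' c w := by
    simp only [Prod.smul_fst, Prod.smul_snd, smul_eq_mul, map_smul,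
      RingHom.id_apply, Prod.smul_mk]
    refine Prod.ext (by simp; ring) (Prod.ext ?_ (by simp; ring))
    simp only [smul_smul, smul_sub, LinearMap.map_smul]
    rw [mul_comm]
    module

/-- The Lie algebra `so(n)` of skew-symmetric endomorphisms of Euclidean `ℝⁿ`. -/
def soE (n : ℕ) : Set (Module.End ℝ (Fin n → ℝ)) := soSet (dotE n)

/-- The subalgebra `co(1,n+1)_{ℝp}` of `co(1,n+1)` preserving the isotropic line `ℝp`,
whose elements are written `(b, a, A, X)`. -/
def coRp (n : ℕ) : Set (Module.End ℝ (Mink n)) :=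
  {F | ∃ b a : ℝ, ∃ A ∈ soE n, ∃ X : Fin n → ℝ, F = coElem b a A X}

/-- `P` is a weak curvature tensor of type `h ⊆ so(n)`. -/
def IsWeakCurv (n : ℕ) (h : Set (Module.End ℝ (Fin n → ℝ)))
    (P : (Fin n → ℝ) →ₗ[ℝ] Module.End ℝ (Fin n → ℝ)) : Prop :=
  (∀ x, P x ∈ h) ∧
    ∀ x y z, dotE n (P x y) z + dotE n (P y z) x + dotE n (P z x) y = 0

/-- The span of all values of weak curvature tensors of type `h`. -/
def weakSpan (n : ℕ) (h : Set (Module.End ℝ (Fin n → ℝ))) :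
    Submodule ℝ (Module.End ℝ (Fin n → ℝ)) :=
  Submodule.span ℝ {A | ∃ P, IsWeakCurv n h P ∧ ∃ U, A = P U}

/-- `h ⊆ so(n)` is a weak Berger algebra (equivalently, by Leistner's theorem,
the holonomy algebra of a Riemannian manifold). -/
def IsWeakBerger (n : ℕ) (h : Set (Module.End ℝ (Fin n → ℝ))) : Prop :=
  (weakSpan n h : Set (Module.End ℝ (Fin n → ℝ))) = h

/-- `S ∈ ℛ(𝔥)`: an algebraic curvature tensor of type `𝔥 ⊆ so(n)` on `ℝⁿ`. -/
def IsCurvE (n : ℕ) (h : Set (Module.End ℝ (Fin n → ℝ)))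
    (S : (Fin n → ℝ) →ₗ[ℝ] (Fin n → ℝ) →ₗ[ℝ] Module.End ℝ (Fin n → ℝ)) : Prop :=
  (∀ x y, S x y = - S y x) ∧ (∀ x y, S x y ∈ h) ∧
    ∀ x y z, S x y z + S y z x + S z x y = 0

/-- The projection of `𝔤 ⊆ co(1,n+1)_{ℝp}` to its `so(n)`-component. -/
def prSoN (n : ℕ) (g : Set (Module.End ℝ (Mink n))) :
    Set (Module.End ℝ (Fin n → ℝ)) :=
  {A | A ∈ soE n ∧ ∃ b a : ℝ, ∃ X : Fin n → ℝ, coElem b a A X ∈ g}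

/-! ### Cyclic sums and spans of curvature values -/

/-- The cyclic sum of `B(T(x,y),z)`; `P` satisfies the identity defining `𝒫(𝔥)` when the cyclic
sum of `(x, y) ↦ P(x)y` vanishes. -/
def cyclicSum (B : LinearMap.BilinForm ℝ V) (T : V → V → V) (x y z : V) : ℝ :=
  B (T x y) z + B (T y z) x + B (T z x) y

lemma two_mul_cyclicSum_of_eq_sub {B : LinearMap.BilinForm ℝ V} (hB : B.IsSymm)
    {P : V → Module.End ℝ V} (hP : ∀ x, P x ∈ soSet B) {c : V → ℝ} {T : V → V → V}
    (hT : ∀ x y, T x y = (P x y + c x • y) - (P y x + c y • x)) (x y z : V) :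
    2 * cyclicSum B (fun u v => P u v) x y z = cyclicSum B T x y z := by
  have skew (u v w : V) : B (P u v) w = -B (P u w) v := by
    have := hP u v w
    rw [hB.eq v] at this
    linarith
  simp only [cyclicSum, hT, map_add, map_sub, map_smul, LinearMap.add_apply, LinearMap.sub_apply,
    LinearMap.smul_apply, smul_eq_mul]
  rw [skew y x z, skew z y x, skew x z y, hB.eq y x, hB.eq z x, hB.eq z y]
  ring

lemma IsCurv.isAlt {g : Set (Module.End ℝ V)} {R : V →ₗ[ℝ] V →ₗ[ℝ] Module.End ℝ V}
    (hR : IsCurv g R) : R.IsAlt := by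
  have := IsAddTorsionFree.of_isTorsionFree ℝ (Module.End ℝ V)
  exact fun x => self_eq_neg.1 (hR.1 x x)

lemma IsCurv.mono {g g' : Set (Module.End ℝ V)} (h : g ⊆ g')
    {R : V →ₗ[ℝ] V →ₗ[ℝ] Module.End ℝ V} (hR : IsCurv g R) : IsCurv g' R :=
  ⟨hR.1, fun x y => h (hR.2.1 x y), hR.2.2⟩

lemma curvSpan_le (g : Submodule ℝ (Module.End ℝ V)) : curvSpan (g : Set (Module.End ℝ V)) ≤ g := by
  rw [curvSpan, Submodule.span_le]
  rintro _ ⟨R, hR, x, y, rfl⟩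
  exact hR.2.1 x y

lemma weakSpan_le {n : ℕ} (h : Submodule ℝ (Module.End ℝ (Fin n → ℝ))) : weakSpan n h ≤ h := by
  rw [weakSpan, Submodule.span_le]
  rintro _ ⟨P, hP, U, rfl⟩
  exact hP.1 U

section Minkowski

variable {n : ℕ}

/-! ### Witt components of vectors and endomorphisms -/

lemma dotE_isSymm : (dotE n).IsSymm :=
  ⟨fun x y => by simp [dotE, mul_comm]⟩

lemma dotE_single_self (i : Fin n) : dotE n (Pi.single i 1) (Pi.single i 1) = 1 := by
  simp [dotE, Pi.single_apply]

@[simp] lemma pvec_fst : (pvec n).1 = 1 := rfl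

@[simp] lemma pvec_snd_fst : (pvec n).2.1 = 0 := rfl

@[simp] lemma pvec_snd_snd : (pvec n).2.2 = 0 := rfl

@[simp] lemma qvec_fst : (qvec n).1 = 0 := rfl

@[simp] lemma qvec_snd_fst : (qvec n).2.1 = 0 := rfl

@[simp] lemma qvec_snd_snd : (qvec n).2.2 = 1 := rfl

@[simp] lemma emb_fst (x : Fin n → ℝ) : (emb x).1 = 0 := rfl

@[simp] lemma emb_snd_fst (x : Fin n → ℝ) : (emb x).2.1 = x := rfl

@[simp] lemma emb_snd_snd (x : Fin n → ℝ) : (emb x).2.2 = 0 := rfl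

lemma eq_smul_pvec_add_emb_add_smul_qvec (w : Mink n) :
    w = w.1 • pvec n + emb w.2.1 + w.2.2 • qvec n := by
  ext <;> simp

lemma apply_eq_of_isAlt {M : Type*} [AddCommGroup M] [Module ℝ M]
    {T : Mink n →ₗ[ℝ] Mink n →ₗ[ℝ] M} (hT : T.IsAlt) (x y : Mink n) :
    T x y = T x (emb y.2.1) - T y (emb x.2.1) - T (emb x.2.1) (emb y.2.1) +
      (x.1 * y.2.2 - x.2.2 * y.1) • T (pvec n) (qvec n) := by
  have left (w v : Mink n) :
      T w v = w.1 • T (pvec n) v + T (emb w.2.1) v + w.2.2 • T (qvec n) v := by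
    conv_lhs => rw [eq_smul_pvec_add_emb_add_smul_qvec w]
    simp only [map_add, map_smul, LinearMap.add_apply, LinearMap.smul_apply]
  have right (v w : Mink n) :
      T v w = w.1 • T v (pvec n) + T v (emb w.2.1) + w.2.2 • T v (qvec n) := by
    conv_lhs => rw [eq_smul_pvec_add_emb_add_smul_qvec w]
    simp only [map_add, map_smul]
  rw [right x y, left x (pvec n), left x (qvec n), left y (emb x.2.1), hT.self_eq_zero,
    hT.self_eq_zero, ← hT.neg (pvec n) (qvec n), ← hT.neg (pvec n) (emb x.2.1),
    ← hT.neg (qvec n) (emb x.2.1), ← hT.neg (emb x.2.1) (emb y.2.1)]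
  module

/-- The inclusion `emb : ℝⁿ → ℝ^{1,n+1}` as a linear map, for composing with curvature tensors. -/
def embₗ : (Fin n → ℝ) →ₗ[ℝ] Mink n where
  toFun := emb
  map_add' x y := by simp [emb]
  map_smul' c x := by simp [emb]

@[simp]
lemma embₗ_apply (x : Fin n → ℝ) : embₗ x = emb x :=
  rfl

/-- The component `b` of `(b, a, A, X)`, extended linearly to all endomorphisms: since
`p ↦ (b + a)·p` and `q ↦ -X + (b - a)·q`, it is half the sum of the two diagonal entries. -/
def homothetyPart : Module.End ℝ (Mink n) →ₗ[ℝ] ℝ where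
  toFun F := ((F (pvec n)).1 + (F (qvec n)).2.2) / 2
  map_add' F G := by
    simp only [LinearMap.add_apply, Prod.fst_add, Prod.snd_add]
    ring
  map_smul' c F := by
    simp only [LinearMap.smul_apply, Prod.smul_fst, Prod.smul_snd, smul_eq_mul, RingHom.id_apply]
    ring

/-- The component `a` of `(b, a, A, X)`, extended linearly to all endomorphisms: half the
difference of the diagonal entries at `p` and `q`. -/
def boostPart : Module.End ℝ (Mink n) →ₗ[ℝ] ℝ where
  toFun F := ((F (pvec n)).1 - (F (qvec n)).2.2) / 2
  map_add' F G := by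
    simp only [LinearMap.add_apply, Prod.fst_add, Prod.snd_add]
    ring
  map_smul' c F := by
    simp only [LinearMap.smul_apply, Prod.smul_fst, Prod.smul_snd, smul_eq_mul, RingHom.id_apply]
    ring

/-- The component `A` of `(b, a, A, X)`, extended linearly to all endomorphisms: the block on `ℝⁿ`
with its homothety `b·id` removed. -/
def soPart : Module.End ℝ (Mink n) →ₗ[ℝ] Module.End ℝ (Fin n → ℝ) where
  toFun F := LinearMap.fst ℝ (Fin n → ℝ) ℝ ∘ₗ LinearMap.snd ℝ ℝ ((Fin n → ℝ) × ℝ) ∘ₗ F ∘ₗ embₗ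
    - homothetyPart F • LinearMap.id
  map_add' F G := by
    refine LinearMap.ext fun x => ?_
    simp only [map_add, add_smul, LinearMap.comp_apply, LinearMap.add_apply, LinearMap.sub_apply]
    abel
  map_smul' c F := by
    refine LinearMap.ext fun x => ?_
    simp [mul_smul, smul_sub]

/-- The component `X` of `(b, a, A, X)`, extended linearly to all endomorphisms: minus the
`ℝⁿ`-part of the image of `q`. -/
def translationPart : Module.End ℝ (Mink n) →ₗ[ℝ] (Fin n → ℝ) where
  toFun F := -(F (qvec n)).2.1
  map_add' F G := by rw [LinearMap.add_apply, Prod.snd_add, Prod.fst_add, neg_add]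
  map_smul' c F := by simp

section coElem

variable (b a : ℝ) (A : Module.End ℝ (Fin n → ℝ)) (X : Fin n → ℝ)

lemma coElem_apply (w : Mink n) :
    coElem b a A X w =
      ((b + a) * w.1 + dotE n X w.2.1, b • w.2.1 + A w.2.1 - w.2.2 • X, (b - a) * w.2.2) :=
  rfl

lemma homothetyPart_coElem : homothetyPart (coElem b a A X) = b := by
  simp [homothetyPart, coElem_apply, pvec, qvec]

lemma boostPart_coElem : boostPart (coElem b a A X) = a := by
  simp [boostPart, coElem_apply, pvec, qvec]

lemma soPart_coElem : soPart (coElem b a A X) = A := by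
  refine LinearMap.ext fun x => ?_
  simp [soPart, homothetyPart_coElem, coElem_apply, emb]

lemma translationPart_coElem : translationPart (coElem b a A X) = X := by
  simp [translationPart, coElem_apply, qvec]

end coElem

lemma soPart_mem_soE {F : Module.End ℝ (Mink n)} (hF : F ∈ coRp n) : soPart F ∈ soE n := by
  obtain ⟨b, a, A, hA, X, rfl⟩ := hF
  rwa [soPart_coElem]

lemma coElem_parts {F : Module.End ℝ (Mink n)} (hF : F ∈ coRp n) :
    coElem (homothetyPart F) (boostPart F) (soPart F) (translationPart F) = F := by
  obtain ⟨b, a, A, -, X, rfl⟩ := hF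
  rw [homothetyPart_coElem, boostPart_coElem, soPart_coElem, translationPart_coElem]

lemma apply_eq_parts {F : Module.End ℝ (Mink n)} (hF : F ∈ coRp n) (w : Mink n) :
    F w = ((homothetyPart F + boostPart F) * w.1 + dotE n (translationPart F) w.2.1,
      homothetyPart F • w.2.1 + soPart F w.2.1 - w.2.2 • translationPart F,
      (homothetyPart F - boostPart F) * w.2.2) := by
  conv_lhs => rw [← coElem_parts hF, coElem_apply]

lemma prSoN_eq_map_soPart {g : Submodule ℝ (Module.End ℝ (Mink n))}
    (hg : (g : Set (Module.End ℝ (Mink n))) ⊆ coRp n) : prSoN n g = g.map soPart := by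
  ext A
  constructor
  · rintro ⟨-, b, a, X, h⟩
    exact ⟨_, h, soPart_coElem b a A X⟩
  · rintro ⟨F, hF, rfl⟩
    exact ⟨soPart_mem_soE (hg hF), _, _, _, (coElem_parts (hg hF)).symm ▸ hF⟩

/-! ### Curvature tensors of type `co(1,n+1)_{ℝp}` -/

section Curvature

variable {R : Mink n →ₗ[ℝ] Mink n →ₗ[ℝ] Module.End ℝ (Mink n)}

lemma bianchi_p_component (hR : IsCurv (coRp n) R) (x y z : Mink n) :
    ((homothetyPart (R x y) + boostPart (R x y)) * z.1 + dotE n (translationPart (R x y)) z.2.1) +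
    ((homothetyPart (R y z) + boostPart (R y z)) * x.1 + dotE n (translationPart (R y z)) x.2.1) +
    ((homothetyPart (R z x) + boostPart (R z x)) * y.1 + dotE n (translationPart (R z x)) y.2.1) =
      0 := by
  have h := congrArg Prod.fst (hR.2.2 x y z)
  rwa [apply_eq_parts (hR.2.1 x y), apply_eq_parts (hR.2.1 y z), apply_eq_parts (hR.2.1 z x)] at h

lemma bianchi_euclidean_component (hR : IsCurv (coRp n) R) (x y z : Mink n) :
    (homothetyPart (R x y) • z.2.1 + soPart (R x y) z.2.1 - z.2.2 • translationPart (R x y)) +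
    (homothetyPart (R y z) • x.2.1 + soPart (R y z) x.2.1 - x.2.2 • translationPart (R y z)) +
    (homothetyPart (R z x) • y.2.1 + soPart (R z x) y.2.1 - y.2.2 • translationPart (R z x)) =
      0 := by
  have h := congrArg (fun w : Mink n => w.2.1) (hR.2.2 x y z)
  rwa [apply_eq_parts (hR.2.1 x y), apply_eq_parts (hR.2.1 y z), apply_eq_parts (hR.2.1 z x)] at h

lemma bianchi_q_component (hR : IsCurv (coRp n) R) (x y z : Mink n) :
    (homothetyPart (R x y) - boostPart (R x y)) * z.2.2 +
    (homothetyPart (R y z) - boostPart (R y z)) * x.2.2 +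
    (homothetyPart (R z x) - boostPart (R z x)) * y.2.2 = 0 := by
  have h := congrArg (fun w : Mink n => w.2.2) (hR.2.2 x y z)
  rwa [apply_eq_parts (hR.2.1 x y), apply_eq_parts (hR.2.1 y z), apply_eq_parts (hR.2.1 z x)] at h

lemma boostPart_emb_emb (hR : IsCurv (coRp n) R) (U W : Fin n → ℝ) :
    boostPart (R (emb U) (emb W)) = homothetyPart (R (emb U) (emb W)) := by
  have h := bianchi_q_component hR (emb U) (emb W) (qvec n)
  simp only [emb_snd_snd, qvec_snd_snd, mul_one, mul_zero, add_zero] at h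
  exact (sub_eq_zero.1 h).symm

lemma translationPart_emb_pvec (hR : IsCurv (coRp n) R) (U : Fin n → ℝ) :
    translationPart (R (emb U) (pvec n)) =
      homothetyPart (R (pvec n) (qvec n)) • U + soPart (R (pvec n) (qvec n)) U := by
  have h := bianchi_euclidean_component hR (pvec n) (qvec n) (emb U)
  simp only [emb_snd_fst, emb_snd_snd, pvec_snd_fst, pvec_snd_snd, qvec_snd_fst,
    qvec_snd_snd, map_zero, smul_zero, zero_smul, one_smul, add_zero, sub_zero, zero_sub] at h
  exact (add_neg_eq_zero.1 h).symm

lemma homothetyPart_emb_emb (hR : IsCurv (coRp n) R) (U W : Fin n → ℝ) :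
    homothetyPart (R (emb U) (emb W)) = dotE n (soPart (R (pvec n) (qvec n)) U) W := by
  have skew := soPart_mem_soE (hR.2.1 (pvec n) (qvec n)) W U
  have h := bianchi_p_component hR (emb U) (emb W) (pvec n)
  rw [boostPart_emb_emb hR, translationPart_emb_pvec hR, ← hR.isAlt.neg (emb U) (pvec n),
    map_neg translationPart, translationPart_emb_pvec hR] at h
  simp only [emb_fst, emb_snd_fst, pvec_fst, pvec_snd_fst, map_add, map_neg, map_smul, map_zero,
    LinearMap.add_apply, LinearMap.neg_apply, LinearMap.smul_apply, smul_eq_mul, mul_zero,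
    mul_one] at h
  rw [dotE_isSymm.eq W] at skew
  rw [dotE_isSymm.eq W U] at h
  linarith

lemma bianchi_emb_emb (hR : IsCurv (coRp n) R) (v : Mink n) (U W : Fin n → ℝ) :
    v.2.2 • translationPart (R (emb U) (emb W)) -
        (homothetyPart (R (emb U) (emb W)) • v.2.1 + soPart (R (emb U) (emb W)) v.2.1) =
      (soPart (R v (emb U)) W + homothetyPart (R v (emb U)) • W) -
        (soPart (R v (emb W)) U + homothetyPart (R v (emb W)) • U) := by
  have h := bianchi_euclidean_component hR (emb U) (emb W) v
  rw [← hR.isAlt.neg v (emb W), map_neg, map_neg] at h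
  simp only [emb_snd_fst, emb_snd_snd, zero_smul, sub_zero, neg_smul, LinearMap.neg_apply] at h ⊢
  rw [← sub_eq_zero, ← neg_eq_zero, ← h]
  abel

lemma cyclicSum_translationPart (hR : IsCurv (coRp n) R) (x y z : Fin n → ℝ) :
    cyclicSum (dotE n) (fun U W => translationPart (R (emb U) (emb W))) x y z = 0 := by
  simpa [cyclicSum] using bianchi_p_component hR (emb x) (emb y) (emb z)

lemma cyclicSum_soPart_emb_emb (hR : IsCurv (coRp n) R) (w x y z : Fin n → ℝ) :
    cyclicSum (dotE n) (fun U W => soPart (R (emb U) (emb W)) w) x y z =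
      cyclicSum (dotE n) (fun U W => homothetyPart (R (emb U) (emb W)) • w) x y z := by
  have skew (U W u : Fin n → ℝ) : dotE n (soPart (R (emb U) (emb W)) w) u =
      -dotE n w (soPart (R (emb U) (emb W)) u) :=
    eq_neg_of_add_eq_zero_left (soPart_mem_soE (hR.2.1 (emb U) (emb W)) w u)
  have h := congrArg (dotE n w) (bianchi_euclidean_component hR (emb x) (emb y) (emb z))
  simp only [emb_snd_fst, emb_snd_snd, zero_smul, sub_zero, map_add, map_smul, smul_eq_mul,
    map_zero] at h
  simp only [cyclicSum, skew, map_smul, LinearMap.smul_apply, smul_eq_mul]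
  linarith

lemma cyclicSum_soPart (hR : IsCurv (coRp n) R) (v : Mink n) (x y z : Fin n → ℝ) :
    cyclicSum (dotE n) (fun U W => soPart (R v (emb U)) W) x y z =
      -cyclicSum (dotE n) (fun U W => homothetyPart (R (emb U) (emb W)) • v.2.1) x y z := by
  have h := two_mul_cyclicSum_of_eq_sub dotE_isSymm
    (fun U => soPart_mem_soE (hR.2.1 v (emb U))) (bianchi_emb_emb hR v) x y z
  have hX := cyclicSum_translationPart hR x y z
  have hA := cyclicSum_soPart_emb_emb hR v.2.1 x y z
  simp only [cyclicSum, map_add, map_sub, map_smul, LinearMap.add_apply, LinearMap.sub_apply,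
    LinearMap.smul_apply, smul_eq_mul] at h hX hA ⊢
  linear_combination h / 2 + v.2.2 / 2 * hX - hA / 2

lemma isWeakCurv_soPart_add {h : Submodule ℝ (Module.End ℝ (Fin n → ℝ))}
    (hR : IsCurv (coRp n) R) (hh : ∀ x y, soPart (R x y) ∈ h) (v : Mink n) :
    IsWeakCurv n h (soPart ∘ₗ R v ∘ₗ embₗ +
      (dotE n v.2.1).smulRight (soPart (R (pvec n) (qvec n)))) := by
  refine ⟨fun U => h.add_mem (hh _ _) (h.smul_mem _ (hh _ _)), fun x y z => ?_⟩
  have key := cyclicSum_soPart hR v x y z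
  simp only [cyclicSum, homothetyPart_emb_emb hR, map_smul, LinearMap.smul_apply,
    smul_eq_mul] at key
  simp only [LinearMap.add_apply, LinearMap.comp_apply, LinearMap.smulRight_apply,
    LinearMap.smul_apply, embₗ_apply, map_add, map_smul, smul_eq_mul]
  linear_combination key

lemma soPart_mem_weakSpan {h : Submodule ℝ (Module.End ℝ (Fin n → ℝ))}
    (hR : IsCurv (coRp n) R) (hh : ∀ x y, soPart (R x y) ∈ h) (x y : Mink n) :
    soPart (R x y) ∈ weakSpan n h := by
  have hP (v : Mink n) (U : Fin n → ℝ) :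
      soPart (R v (emb U)) + dotE n v.2.1 U • soPart (R (pvec n) (qvec n)) ∈ weakSpan n h :=
    Submodule.subset_span ⟨_, isWeakCurv_soPart_add hR hh v, U, rfl⟩
  have hpq : soPart (R (pvec n) (qvec n)) ∈ weakSpan n h := by
    cases isEmpty_or_nonempty (Fin n) with
    | inl _ => simp [Subsingleton.elim (soPart (R (pvec n) (qvec n))) 0]
    | inr hn =>
      obtain ⟨i⟩ := hn
      have hi := hP (emb (Pi.single i 1)) (Pi.single i 1)
      rwa [hR.isAlt.self_eq_zero, map_zero, zero_add, emb_snd_fst, dotE_single_self, one_smul] at hi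
  have hemb (v : Mink n) (U : Fin n → ℝ) : soPart (R v (emb U)) ∈ weakSpan n h :=
    (Submodule.add_mem_iff_left _ (Submodule.smul_mem _ _ hpq)).1 (hP v U)
  rw [apply_eq_of_isAlt hR.isAlt x y]
  simp only [map_add, map_sub, map_smul]
  exact add_mem (sub_mem (sub_mem (hemb _ _) (hemb _ _)) (hemb _ _)) (Submodule.smul_mem _ _ hpq)

end Curvature

lemma map_soPart_curvSpan_le {g : Submodule ℝ (Module.End ℝ (Mink n))}
    (hg : (g : Set (Module.End ℝ (Mink n))) ⊆ coRp n) :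
    (curvSpan (g : Set (Module.End ℝ (Mink n)))).map soPart ≤ weakSpan n (g.map soPart) := by
  rw [curvSpan, Submodule.map_span_le]
  rintro _ ⟨R, hR, x, y, rfl⟩
  exact soPart_mem_weakSpan (hR.mono hg) (fun x y => Submodule.mem_map_of_mem (hR.2.1 x y)) x y

end Minkowski

theorem projection_weak_Berger_general (n : ℕ) (g : Set (Module.End ℝ (Mink n)))
    (hg : g ⊆ coRp n) (hB : IsBerger g) :
    (Submodule.span ℝ
        ({A | ∃ S, IsCurvE n (prSoN n g) S ∧ ∃ U W : Fin n → ℝ, A = S U W} ∪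
         {A | ∃ P, IsWeakCurv n (prSoN n g) P ∧ ∃ U : Fin n → ℝ, A = P U}) :
        Set (Module.End ℝ (Fin n → ℝ))) = prSoN n g ∧
    IsWeakBerger n (prSoN n g) := by
  obtain ⟨g, rfl⟩ : ∃ g' : Submodule ℝ (Module.End ℝ (Mink n)), (g' : Set _) = g := ⟨_, hB⟩
  rw [prSoN_eq_map_soPart hg]
  set h := g.map soPart
  have hweak : weakSpan n h = h := by
    refine (weakSpan_le h).antisymm ((Submodule.map_mono ?_).trans (map_soPart_curvSpan_le hg))
    exact (SetLike.coe_injective hB).ge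
  have hspan : curvSpan (h : Set _) ⊔ weakSpan n h = h := by
    rw [hweak, sup_eq_right.2 (curvSpan_le h)]
  refine ⟨?_, congrArg SetLike.coe hweak⟩
  rw [Submodule.span_union]
  exact congrArg SetLike.coe hspan

/-- If `𝔤 ⊆ co(1,n+1)_{ℝp}` is a Berger algebra, then its projection
`𝔥 = pr_{so(n)} 𝔤` is spanned by the values of the tensors `S ∈ ℛ(𝔥)` and
`P ∈ 𝒫(𝔥)`; in particular `𝔥` is a weak Berger algebra (equivalently, by
Leistner's theorem, the holonomy algebra of a Riemannian manifold). -/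
theorem projection_weak_Berger (n : ℕ) (g : Set (Module.End ℝ (Mink n)))
    (hsub : IsLieSub g) (hg : g ⊆ coRp n) (hB : IsBerger g) :
    (Submodule.span ℝ
        ({A | ∃ S, IsCurvE n (prSoN n g) S ∧ ∃ U W : Fin n → ℝ, A = S U W} ∪
         {A | ∃ P, IsWeakCurv n (prSoN n g) P ∧ ∃ U : Fin n → ℝ, A = P U}) :
        Set (Module.End ℝ (Fin n → ℝ))) = prSoN n g ∧
    IsWeakBerger n (prSoN n g) :=
  projection_weak_Berger_general n g hg hB

end Weyl
end
end

section
/- If 𝔤 ⊆ co(1,n+1) is a subalgebra acting irreducibly on ℝ^{1,n+1} and 𝔤 is not contained in so(1,n+1), then 𝔤 = co(1,n+1). -/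
open Module

noncomputable section

namespace Weyl

variable {V : Type*} [AddCommGroup V] [Module ℝ V]

/-!
Project `g` to `so(B)`. The projection `h` is again an irreducible Lie algebra, and
`[h, h] = [g, g] ⊆ g`. The point is that `[h, h]` is all of `so(B)`: then `so(B) ⊆ g`, and an
element of `g` which is not skew yields the identity.

Some `A ∈ h` has a nonzero real eigenvalue. Otherwise all eigenvalues of elements of `h` are
imaginary, so `-tr(ST)` is positive semidefinite on `h`, its radical is an ideal of nilpotent
endomorphisms, and by Engel's theorem and irreducibility it vanishes. The Casimir operator of this
inner product commutes with `h`, so by Schur's lemma it is a root of a real quadratic polynomial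
without distinct real roots. Such an operator cannot be negative on every null vector, but the
Casimir operator is.

The eigenvectors of `A` for `±l` span a hyperbolic plane, with a Witt basis `p, q`. For a suitable
Euclidean inner product the adjoint of `A` is `-A - 2l p ∧ q`, which commutes with `A`; a subspace
invariant under a normal operator is invariant under its adjoint, so `p ∧ q` normalises `h`. The
grading of `h` by `ad (p ∧ q)` gives first `p ∧ V ⊆ [h, h]` and then, by irreducibility, all of
`V ∧ V = so(B)`.
-/

section Lorentzian

variable {B : LinearMap.BilinForm ℝ V}

/-- `B` is a Lorentzian form: it is symmetric and positive definite on the orthogonal complement of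
some timelike vector. Unlike a signature, this makes sense without choosing a basis. -/
structure IsLorentzian (B : LinearMap.BilinForm ℝ V) : Prop where
  symm : ∀ x y, B x y = B y x
  exists_timelike : ∃ t, B t t < 0 ∧ ∀ w, B t w = 0 → w ≠ 0 → 0 < B w w

theorem IsLorentzian.exists_eq_smul (hB : IsLorentzian B) {v w : V} (hv : B v v ≤ 0)
    (hw : B w w ≤ 0) (hvw : B v w = 0) (hv0 : v ≠ 0) : ∃ c : ℝ, w = c • v := by
  obtain ⟨t, -, ht⟩ := hB.exists_timelike
  have htv : B t v ≠ 0 := fun h => (ht v h hv0).not_ge hv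
  refine ⟨B t w / B t v, ?_⟩
  set c := B t w / B t v
  by_contra hne
  have hpos : 0 < B (w - c • v) (w - c • v) :=
    ht _ (by simp [c, div_mul_cancel₀ _ htv]) (sub_ne_zero.2 hne)
  have hexp : B (w - c • v) (w - c • v) = B w w + c ^ 2 * B v v := by
    simp only [map_sub, map_smul, LinearMap.sub_apply, LinearMap.smul_apply, smul_eq_mul, hvw,
      hB.symm w v]
    ring
  nlinarith [mul_nonneg (sq_nonneg c) (neg_nonneg.2 hv)]

theorem IsLorentzian.pos_of_timelike_orthogonal (hB : IsLorentzian B) {v w : V} (hv : B v v < 0)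
    (hvw : B v w = 0) (hw : w ≠ 0) : 0 < B w w := by
  by_contra! h
  have hv0 : v ≠ 0 := by rintro rfl; simp at hv
  obtain ⟨c, rfl⟩ := hB.exists_eq_smul hv.le h hvw hv0
  simp only [map_smul, smul_eq_mul, mul_eq_zero, hv.ne, or_false] at hvw
  simp [hvw] at hw

theorem IsLorentzian.nonneg_of_causal_orthogonal (hB : IsLorentzian B) {v w : V} (hv : B v v ≤ 0)
    (hv0 : v ≠ 0) (hvw : B v w = 0) : 0 ≤ B w w := by
  by_contra! h
  obtain ⟨c, hc⟩ := hB.exists_eq_smul hv h.le hvw hv0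
  have hww : B w w = c * B v w := by nth_rw 1 [hc]; simp
  rw [hww, hvw, mul_zero] at h
  exact lt_irrefl 0 h

theorem IsLorentzian.nondegenerate (hB : IsLorentzian B) : B.Nondegenerate := by
  obtain ⟨t, -, ht⟩ := hB.exists_timelike
  have hleft : ∀ x, (∀ y, B x y = 0) → x = 0 := fun x hx => by
    by_contra hx0
    exact (ht x (by rw [hB.symm, hx]) hx0).ne' (hx x)
  exact ⟨hleft, fun y hy => hleft y fun x => by rw [hB.symm, hy]⟩

end Lorentzian

section Skew

variable {B : LinearMap.BilinForm ℝ V} {S : Module.End ℝ V}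

theorem apply_left_of_mem_soSet (hS : S ∈ soSet B) (x y : V) : B (S x) y = -B x (S y) :=
  eq_neg_of_add_eq_zero_left (hS x y)

theorem apply_self_of_mem_soSet (hsymm : ∀ x y, B x y = B y x) (hS : S ∈ soSet B) (x : V) :
    B x (S x) = 0 := by
  have h := hS x x
  rw [hsymm (S x) x] at h
  linarith

end Skew

section Spectrum

/-- `quadAt A z` is `(A - z) (A - z̄)`, which is a polynomial in `A` with real coefficients. -/
def quadAt (A : Module.End ℝ V) (z : ℂ) : Module.End ℝ V :=
  (A - z.re • 1) ^ 2 + (z.im ^ 2) • 1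

theorem quadAt_apply (A : Module.End ℝ V) (z : ℂ) (x : V) :
    quadAt A z x = A (A x) - (2 * z.re) • A x + (z.re ^ 2 + z.im ^ 2) • x := by
  simp only [quadAt, pow_two, LinearMap.add_apply, Module.End.mul_apply, LinearMap.sub_apply,
    LinearMap.smul_apply, Module.End.one_apply, map_sub, map_smul]
  module

theorem baseChange_quadAt (A : Module.End ℝ V) (z : ℂ) :
    (quadAt A z).baseChange ℂ =
      (algebraMap ℂ _ z - A.baseChange ℂ) * (algebraMap ℂ _ (star z) - A.baseChange ℂ) := by
  change Module.End.baseChangeHom ℝ ℂ V (quadAt A z) =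
    (_ - Module.End.baseChangeHom ℝ ℂ V A) * (_ - Module.End.baseChangeHom ℝ ℂ V A)
  have hsum : z + star z = algebraMap ℝ ℂ (2 * z.re) := by simp [Complex.add_conj]
  have hprod : z * star z = algebraMap ℝ ℂ (z.re ^ 2 + z.im ^ 2) := by
    simp [Complex.mul_conj, Complex.normSq_apply, pow_two]
  generalize Module.End.baseChangeHom ℝ ℂ V = Φ
  have hexp : (algebraMap ℂ _ z - Φ A) * (algebraMap ℂ _ (star z) - Φ A) =
      Φ A * Φ A - (z + star z) • Φ A + (z * star z) • 1 := by
    simp only [Algebra.algebraMap_eq_smul_one, sub_mul, mul_sub, smul_mul_assoc, mul_smul_comm,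
      one_mul, mul_one]
    module
  rw [hexp, hsum, hprod, algebraMap_smul, algebraMap_smul]
  simp only [quadAt, pow_two, map_add, map_mul, map_sub, map_smul, map_one, sub_mul, mul_sub,
    smul_mul_assoc, mul_smul_comm, one_mul, mul_one]
  module

theorem exists_quadAt_apply_eq_zero [FiniteDimensional ℝ V] {A : Module.End ℝ V} {z : ℂ}
    (hz : z ∈ spectrum ℂ (A.baseChange ℂ)) : ∃ x ≠ 0, quadAt A z x = 0 := by
  by_contra! hker
  have hunit : IsUnit (quadAt A z) :=
    (LinearMap.isUnit_iff_ker_eq_bot _).2 <| LinearMap.ker_eq_bot'.2 fun x hx => by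
      by_contra hx0
      exact hker x hx0 hx
  have hfactor := hunit.map (Module.End.baseChangeHom ℝ ℂ V)
  change IsUnit ((quadAt A z).baseChange ℂ) at hfactor
  have hcomm : Commute (algebraMap ℂ _ z - A.baseChange ℂ)
      (algebraMap ℂ _ (star z) - A.baseChange ℂ) :=
    ((Algebra.commute_algebraMap_left _ _).sub_right (Algebra.commute_algebraMap_left _ _)).sub_left
      ((Algebra.commute_algebraMap_right _ _).sub_right (.refl _))
  rw [baseChange_quadAt, hcomm.isUnit_mul_iff] at hfactor
  exact hz hfactor.1

section Complex

variable {E : Type*} [AddCommGroup E] [Module ℂ E] [FiniteDimensional ℂ E] {T : Module.End ℂ E}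

theorem mem_spectrum_of_mem_roots_charpoly {w : ℂ} (hw : w ∈ T.charpoly.roots) :
    w ∈ spectrum ℂ T :=
  (Module.End.mem_spectrum_iff_isRoot_charpoly T w).2 (Polynomial.isRoot_of_mem_roots hw)

theorem isNilpotent_of_spectrum_subset (hT : spectrum ℂ T ⊆ {0}) : IsNilpotent T := by
  have hroots : ∀ w ∈ T.charpoly.roots, w = 0 := fun w hw =>
    hT (mem_spectrum_of_mem_roots_charpoly hw)
  have hsplits := IsAlgClosed.splits T.charpoly
  have hcharpoly := hsplits.eq_prod_roots_of_monic T.charpoly_monic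
  rw [Multiset.eq_replicate_card.2 hroots, Multiset.map_replicate, Multiset.prod_replicate,
    Polynomial.C_0, sub_zero, ← hsplits.natDegree_eq_card_roots, LinearMap.charpoly_natDegree]
    at hcharpoly
  exact (LinearMap.isNilpotent_iff_charpoly T).2 hcharpoly

theorem neg_re_trace_eq_sum_roots_charpoly :
    -(LinearMap.trace ℂ E T).re = (T.charpoly.roots.map fun w => -w.re).sum := by
  rw [Module.End.trace_eq_sum_roots_charpoly_of_splits (IsAlgClosed.splits T.charpoly),
    Multiset.sum_map_neg]
  exact congrArg _ (map_multiset_sum Complex.reAddGroupHom _)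

theorem nonneg_of_mem_neg_re_roots (hT : ∀ w ∈ spectrum ℂ T, w.re ≤ 0) :
    ∀ x ∈ T.charpoly.roots.map fun w => -w.re, 0 ≤ x := fun x hx => by
  obtain ⟨w, hw, rfl⟩ := Multiset.mem_map.1 hx
  exact neg_nonneg.2 (hT w (mem_spectrum_of_mem_roots_charpoly hw))

theorem re_trace_nonpos (hT : ∀ w ∈ spectrum ℂ T, w.re ≤ 0) : (LinearMap.trace ℂ E T).re ≤ 0 := by
  rw [← neg_nonneg, neg_re_trace_eq_sum_roots_charpoly]
  exact Multiset.sum_nonneg (nonneg_of_mem_neg_re_roots hT)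

theorem re_eq_zero_of_re_trace_eq_zero (hT : ∀ w ∈ spectrum ℂ T, w.re ≤ 0)
    (htr : (LinearMap.trace ℂ E T).re = 0) {w : ℂ} (hw : w ∈ spectrum ℂ T) : w.re = 0 := by
  rw [← neg_eq_zero, neg_re_trace_eq_sum_roots_charpoly] at htr
  have hroot : w ∈ T.charpoly.roots := (Polynomial.mem_roots T.charpoly_monic.ne_zero).2
    ((Module.End.mem_spectrum_iff_isRoot_charpoly T w).1 hw)
  exact neg_eq_zero.1 <| Multiset.all_zero_of_le_zero_le_of_sum_eq_zero
    (nonneg_of_mem_neg_re_roots hT) htr _ (Multiset.mem_map_of_mem _ hroot)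

end Complex

section Imaginary

variable {A : Module.End ℝ V}

theorem re_nonpos_of_mem_spectrum_sq (hA : ∀ z ∈ spectrum ℂ (A.baseChange ℂ), z.re = 0)
    {w : ℂ} (hw : w ∈ spectrum ℂ (A.baseChange ℂ ^ 2)) : w.re ≤ 0 := by
  rw [spectrum.map_pow_of_pos _ two_pos] at hw
  obtain ⟨z, hz, rfl⟩ := hw
  simp only [pow_two, Complex.mul_re, hA z hz]
  nlinarith [sq_nonneg z.im]

variable [FiniteDimensional ℝ V]

theorem trace_mul_self_eq_re_trace :
    LinearMap.trace ℝ V (A * A) = (LinearMap.trace ℂ _ (A.baseChange ℂ ^ 2)).re := by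
  rw [pow_two, ← LinearMap.baseChange_mul, LinearMap.trace_baseChange]
  rfl

theorem trace_mul_self_nonpos (hA : ∀ z ∈ spectrum ℂ (A.baseChange ℂ), z.re = 0) :
    LinearMap.trace ℝ V (A * A) ≤ 0 := by
  rw [trace_mul_self_eq_re_trace]
  exact re_trace_nonpos fun _ => re_nonpos_of_mem_spectrum_sq hA

theorem isNilpotent_of_trace_mul_self_eq_zero
    (hA : ∀ z ∈ spectrum ℂ (A.baseChange ℂ), z.re = 0) (htr : LinearMap.trace ℝ V (A * A) = 0) :
    IsNilpotent A := by
  rw [trace_mul_self_eq_re_trace] at htr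
  have hspec : spectrum ℂ (A.baseChange ℂ) ⊆ {0} := fun z hz => by
    have hre := re_eq_zero_of_re_trace_eq_zero
      (fun _ => re_nonpos_of_mem_spectrum_sq hA) htr (spectrum.pow_mem_pow _ 2 hz)
    refine Complex.ext (hA z hz) ?_
    simpa [pow_two, hA z hz] using hre
  exact (IsNilpotent.map_iff (f := Module.End.baseChangeHom ℝ ℂ V)
    (LinearMap.baseChangeHom_injective ℝ V ℂ)).1 (isNilpotent_of_spectrum_subset hspec)

end Imaginary

end Spectrum

theorem IsLorentzian.hasEigenvalue_re [FiniteDimensional ℝ V] {B : LinearMap.BilinForm ℝ V}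
    (hB : IsLorentzian B) {A : Module.End ℝ V} (hA : A ∈ soSet B) {z : ℂ}
    (hz : z ∈ spectrum ℂ (A.baseChange ℂ)) (hre : z.re ≠ 0) : A.HasEigenvalue z.re := by
  obtain ⟨u, hu0, hu⟩ := exists_quadAt_apply_eq_zero hz
  rw [quadAt_apply] at hu
  have hpos : 0 < z.re ^ 2 + z.im ^ 2 := by positivity
  have hAAu : A (A u) = (2 * z.re) • A u - (z.re ^ 2 + z.im ^ 2) • u := by
    rw [← sub_eq_zero, ← hu]; abel
  have huAu : B u (A u) = 0 := apply_self_of_mem_soSet hB.symm hA u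
  have hAuAu : B (A u) (A u) = 0 := by
    have h := apply_self_of_mem_soSet hB.symm hA (A u)
    rw [hAAu, map_sub, map_smul, map_smul, hB.symm (A u) u, huAu] at h
    simpa [hre] using h
  have huu : B u u = 0 := by
    have h := hA u (A u)
    rw [hAuAu, hAAu, map_sub, map_smul, map_smul, huAu] at h
    simpa [hpos.ne'] using h
  obtain ⟨c, hc⟩ := hB.exists_eq_smul huu.le hAuAu.le huAu hu0
  have hroot : (c ^ 2 - 2 * z.re * c + (z.re ^ 2 + z.im ^ 2)) • u = 0 := by
    rw [← hu, hc, map_smul, hc]; module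
  have hcz : c = z.re := by
    have := (smul_eq_zero.1 hroot).resolve_right hu0
    nlinarith [sq_nonneg (c - z.re), sq_nonneg z.im]
  exact Module.End.hasEigenvalue_of_hasEigenvector
    ⟨Module.End.mem_eigenspace_iff.2 (hcz ▸ hc), hu0⟩

section InnerProduct

variable {E : Type*} [AddCommGroup E] [Module ℝ E]

/-- `β` is an inner product. It is kept as a bilinear form, rather than turned into an
`InnerProductSpace` instance, because several inner products occur on the same space. -/
structure IsInnerProduct (β : LinearMap.BilinForm ℝ E) : Prop where
  symm : ∀ x y, β x y = β y x
  pos : ∀ x, x ≠ 0 → 0 < β x x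

/-- The family `b` is orthonormal with respect to the bilinear form `β`. -/
def IsOrthonormal {ι : Type*} [DecidableEq ι] (β : LinearMap.BilinForm ℝ E) (b : ι → E) : Prop :=
  ∀ i j, β (b i) (b j) = if i = j then 1 else 0

variable {β : LinearMap.BilinForm ℝ E}

theorem IsInnerProduct.nonneg (hβ : IsInnerProduct β) (x : E) : 0 ≤ β x x := by
  rcases eq_or_ne x 0 with rfl | hx
  · simp
  · exact (hβ.pos x hx).le

theorem IsInnerProduct.eq_zero (hβ : IsInnerProduct β) {x : E} (hx : β x x = 0) : x = 0 := by
  by_contra hx0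
  exact (hβ.pos x hx0).ne' hx

theorem IsInnerProduct.restrict (hβ : IsInnerProduct β) (W : Submodule ℝ E) :
    IsInnerProduct (β.restrict W) where
  symm x y := hβ.symm x y
  pos x hx := hβ.pos x (by simpa using hx)

theorem IsInnerProduct.exists_isOrthonormal [FiniteDimensional ℝ E] (hβ : IsInnerProduct β) :
    ∃ b : Basis (Fin (finrank ℝ E)) ℝ E, IsOrthonormal β b := by
  let core : InnerProductSpace.Core ℝ E :=
    { inner := fun x y => β x y
      conj_inner_symm := fun x y => hβ.symm y x
      re_inner_nonneg := hβ.nonneg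
      add_left := fun x y z => by simp
      smul_left := fun x y r => by simp
      definite := fun x => hβ.eq_zero }
  let _ : NormedAddCommGroup E := core.toNormedAddCommGroup
  let _ : InnerProductSpace ℝ E := InnerProductSpace.ofCore core.toCore
  let b := stdOrthonormalBasis ℝ E
  exact ⟨b.toBasis, fun i j => by
    rw [OrthonormalBasis.coe_toBasis]
    exact orthonormal_iff_ite.1 b.orthonormal i j⟩

section Basis

variable {ι : Type*} [Fintype ι] [DecidableEq ι] {b : Basis ι ℝ E}

theorem IsOrthonormal.sum_apply_smul (hb : IsOrthonormal β b) (x : E) :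
    ∑ i, β (b i) x • b i = x := by
  have hrepr : ∀ i, β (b i) x = b.repr x i := fun i => by
    conv_lhs => rw [← b.sum_repr x]
    simp only [map_sum, map_smul, hb i _, smul_eq_mul, mul_ite, mul_one, mul_zero,
      Finset.sum_ite_eq, Finset.mem_univ, if_true]
  simp only [hrepr, b.sum_repr]

theorem IsOrthonormal.sum_adjoint {F : Type*} [AddCommGroup F] [Module ℝ F]
    (hβ : ∀ x y, β x y = β y x) (hb : IsOrthonormal β b) {K K' : Module.End ℝ E}
    (hK : ∀ x y, β (K x) y = β x (K' y)) (γ : E →ₗ[ℝ] E →ₗ[ℝ] F) :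
    ∑ i, γ (K (b i)) (b i) = ∑ i, γ (b i) (K' (b i)) := by
  calc ∑ i, γ (K (b i)) (b i)
      = ∑ i, ∑ j, β (b j) (K (b i)) • γ (b j) (b i) := by
        refine Finset.sum_congr rfl fun i _ => ?_
        conv_lhs => rw [← hb.sum_apply_smul (K (b i))]
        simp only [map_sum, map_smul, LinearMap.sum_apply, LinearMap.smul_apply]
    _ = ∑ j, ∑ i, β (b i) (K' (b j)) • γ (b j) (b i) := by
        rw [Finset.sum_comm]
        simp only [hβ (b _) (K _), hK]
    _ = ∑ j, γ (b j) (K' (b j)) := by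
        refine Finset.sum_congr rfl fun j _ => ?_
        conv_rhs => rw [← hb.sum_apply_smul (K' (b j))]
        simp only [map_sum, map_smul]

end Basis

end InnerProduct

attribute [local instance] LieRing.ofAssociativeRing

theorem commute_casimir {L R : Type*} [LieRing L] [LieAlgebra ℝ L] [Ring R] [Algebra ℝ R]
    {ι : Type*} [Fintype ι] [DecidableEq ι] (φ : L →ₗ⁅ℝ⁆ R) {β : LinearMap.BilinForm ℝ L}
    (hβ : ∀ x y, β x y = β y x) (hinv : β.lieInvariant L) {b : Basis ι ℝ L}
    (hb : IsOrthonormal β b) (x : L) : Commute (φ x) (∑ i, φ (b i) * φ (b i)) := by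
  let K := LieAlgebra.ad ℝ L x
  have hadj : ∑ i, φ (K (b i)) * φ (b i) = ∑ i, φ (b i) * φ ((-K) (b i)) :=
    hb.sum_adjoint hβ (fun y z => by
      simpa only [K, LinearMap.neg_apply, map_neg, LieAlgebra.ad_apply] using hinv x y z)
      ((LinearMap.mul ℝ R).compl₁₂ (φ : L →ₗ[ℝ] R) (φ : L →ₗ[ℝ] R))
  have hlie : φ x * (∑ i, φ (b i) * φ (b i)) - (∑ i, φ (b i) * φ (b i)) * φ x =
      ∑ i, φ (K (b i)) * φ (b i) - ∑ i, φ (b i) * φ ((-K) (b i)) := by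
    simp only [Finset.mul_sum, Finset.sum_mul, ← Finset.sum_sub_distrib, LinearMap.neg_apply,
      map_neg, K, LieAlgebra.ad_apply, LieHom.map_lie, Ring.lie_def]
    exact Finset.sum_congr rfl fun i _ => by noncomm_ring
  exact sub_eq_zero.1 (by rw [hlie, hadj, sub_self])

theorem lieInvariant_neg_traceForm (h : LieSubalgebra ℝ (Module.End ℝ V)) :
    (-LieModule.traceForm ℝ h V).lieInvariant h := fun X A C =>
  congrArg Neg.neg (LieModule.traceForm_lieInvariant ℝ h V X A C)

section Irreducible

variable [FiniteDimensional ℝ V] {h : LieSubalgebra ℝ (Module.End ℝ V)}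

theorem Irred.exists_quadAt_eq_zero [Nontrivial V] {g : Set (Module.End ℝ V)} (hirr : Irred g)
    {C : Module.End ℝ V} (hC : ∀ S ∈ g, Commute S C) : ∃ z : ℂ, quadAt C z = 0 := by
  obtain ⟨z, hz⟩ := spectrum.nonempty_of_isAlgClosed_of_finiteDimensional ℂ (C.baseChange ℂ)
  obtain ⟨x, hx0, hx⟩ := exists_quadAt_apply_eq_zero hz
  have hinv : Invariant g (LinearMap.ker (quadAt C z)) := fun S hS y hy => by
    have hcomm : Commute S (quadAt C z) :=
      (((hC S hS).sub_right ((Commute.one_right S).smul_right _)).pow_right 2).add_right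
        ((Commute.one_right S).smul_right _)
    rw [LinearMap.mem_ker, ← Module.End.mul_apply, ← hcomm.eq, Module.End.mul_apply,
      LinearMap.mem_ker.1 hy, map_zero]
  rcases hirr _ hinv with hbot | htop
  · exact absurd ((Submodule.mem_bot ℝ).1 (hbot ▸ LinearMap.mem_ker.2 hx)) hx0
  · exact ⟨z, LinearMap.ker_eq_top.1 htop⟩

theorem Irred.lieIdeal_eq_bot [Nontrivial V] (hirr : Irred (h : Set (Module.End ℝ V)))
    (I : LieIdeal ℝ h) (hI : ∀ A ∈ I, IsNilpotent (A : Module.End ℝ V)) : I = ⊥ := by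
  have hnil : LieModule.IsNilpotent I V :=
    (LieModule.isNilpotent_iff_forall' (R := ℝ)).2 fun A => hI A.1 A.2
  have := LieModule.nontrivial_max_triv_of_isNilpotent ℝ I V
  obtain ⟨v, hv0⟩ := exists_ne (0 : LieModule.maxTrivSubmodule ℝ I V)
  have hmem : ∀ x, x ∈ LieModule.maxTrivSubmodule ℝ I V ↔ ∀ A ∈ I, (A : Module.End ℝ V) x = 0 :=
    fun x => ⟨fun hx A hA => hx ⟨A, hA⟩, fun hx A => hx A.1 A.2⟩
  have hinv : Invariant (h : Set (Module.End ℝ V)) (LieModule.maxTrivSubmodule ℝ I V) := by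
    intro S hS x hx
    refine (hmem _).2 fun A hA => ?_
    have hlie := (hmem x).1 hx _ (lie_mem_right ℝ h I ⟨S, hS⟩ A hA)
    have hAx := (hmem x).1 hx A hA
    simpa [Ring.lie_def, hAx] using hlie
  rcases hirr _ hinv with hbot | htop
  · have hv : v.1 ∈ (⊥ : Submodule ℝ V) := hbot ▸ v.2
    exact absurd (Subtype.ext ((Submodule.mem_bot ℝ).1 hv)) hv0
  · rw [LieSubmodule.eq_bot_iff]
    refine fun A hA => Subtype.ext (LinearMap.ext fun x => (hmem x).1 ?_ A hA)
    exact (htop ▸ Submodule.mem_top : x ∈ (LieModule.maxTrivSubmodule ℝ I V).toSubmodule)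

theorem Irred.isInnerProduct_neg_traceForm [Nontrivial V]
    (hirr : Irred (h : Set (Module.End ℝ V)))
    (himag : ∀ A ∈ h, ∀ z ∈ spectrum ℂ (A.baseChange ℂ), z.re = 0) :
    IsInnerProduct (-LieModule.traceForm ℝ h V) := by
  set β : LinearMap.BilinForm ℝ h := -LieModule.traceForm ℝ h V
  have happly : ∀ A C : h, β A C = -LinearMap.trace ℝ V (A.1 * C.1) := fun _ _ => rfl
  have hsymm : ∀ A C, β A C = β C A := fun A C => by
    rw [happly, happly, LinearMap.trace_mul_comm]
  have hnonneg : ∀ A, 0 ≤ β A A := fun A =>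
    neg_nonneg.2 (trace_mul_self_nonpos (himag A A.2))
  let I := LieAlgebra.InvariantForm.orthogonal β (lieInvariant_neg_traceForm h) ⊤
  have hmem : ∀ A, A ∈ I ↔ ∀ C, β C A = 0 := fun A => by
    simp [I, LieAlgebra.InvariantForm.mem_orthogonal]
  have hI : I = ⊥ := hirr.lieIdeal_eq_bot I fun A hA =>
    isNilpotent_of_trace_mul_self_eq_zero (himag A A.2) <| neg_eq_zero.1 ((hmem A).1 hA A)
  refine ⟨hsymm, fun A hA0 => (hnonneg A).lt_of_ne' fun hAA => hA0 ?_⟩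
  have hker : β A = 0 := LinearMap.mem_ker.1 <|
    (LinearMap.BilinForm.apply_apply_same_eq_zero_iff β hnonneg ⟨hsymm⟩).1 hAA
  have hAI : A ∈ I := (hmem A).2 fun C => by rw [hsymm, hker, LinearMap.zero_apply]
  exact (LieSubmodule.mem_bot A).1 (hI ▸ hAI)

end Irreducible

section Hyperbolic

variable {B : LinearMap.BilinForm ℝ V}

theorem IsLorentzian.nontrivial (hB : IsLorentzian B) : Nontrivial V := by
  obtain ⟨t, ht, -⟩ := hB.exists_timelike
  exact ⟨t, 0, by rintro rfl; simp at ht⟩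

theorem IsLorentzian.exists_apply_notMem_span (hB : IsLorentzian B)
    {g : Set (Module.End ℝ V)} (hirr : Irred g) {x : V} (hx : B x x = 0) (hx0 : x ≠ 0) :
    ∃ S ∈ g, S x ∉ Submodule.span ℝ {x} := by
  by_contra! hspan
  have hinv : Invariant g (Submodule.span ℝ {x}) := fun S hS y hy => by
    obtain ⟨c, rfl⟩ := Submodule.mem_span_singleton.1 hy
    rw [map_smul]
    exact Submodule.smul_mem _ c (hspan S hS)
  rcases hirr _ hinv with hbot | htop
  · exact hx0 (Submodule.span_singleton_eq_bot.1 hbot)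
  · obtain ⟨t, ht, -⟩ := hB.exists_timelike
    obtain ⟨c, rfl⟩ := Submodule.mem_span_singleton.1 (htop ▸ Submodule.mem_top : t ∈ _)
    simp [hx] at ht

theorem IsLorentzian.casimir_neg (hB : IsLorentzian B) {h : LieSubalgebra ℝ (Module.End ℝ V)}
    (hso : (h : Set (Module.End ℝ V)) ⊆ soSet B) (hirr : Irred (h : Set (Module.End ℝ V)))
    {ι : Type*} [Fintype ι] (b : Basis ι ℝ h) {x : V} (hx : B x x = 0) (hx0 : x ≠ 0) :
    B ((∑ i, (b i).1 * (b i).1 : Module.End ℝ V) x) x < 0 := by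
  have hsum : B ((∑ i, (b i).1 * (b i).1 : Module.End ℝ V) x) x =
      -∑ i, B ((b i).1 x) ((b i).1 x) := by
    simp only [LinearMap.sum_apply, map_sum, Module.End.mul_apply,
      apply_left_of_mem_soSet (hso (b _).2), Finset.sum_neg_distrib]
  have horth : ∀ i, B x ((b i).1 x) = 0 := fun i =>
    apply_self_of_mem_soSet hB.symm (hso (b i).2) x
  have hnonneg : ∀ i ∈ Finset.univ, 0 ≤ B ((b i).1 x) ((b i).1 x) := fun i _ =>
    hB.nonneg_of_causal_orthogonal hx.le hx0 (horth i)
  rw [hsum, neg_lt_zero]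
  refine (Finset.sum_nonneg hnonneg).lt_of_ne' fun hzero => ?_
  have hspan : ∀ i, (b i).1 x ∈ Submodule.span ℝ {x} := fun i => by
    have hnull := (Finset.sum_eq_zero_iff_of_nonneg hnonneg).1 hzero i (Finset.mem_univ i)
    obtain ⟨c, hc⟩ := hB.exists_eq_smul hx.le hnull.le (horth i) hx0
    exact Submodule.mem_span_singleton.2 ⟨c, hc.symm⟩
  obtain ⟨S, hS, hSx⟩ := hB.exists_apply_notMem_span hirr hx hx0
  have hrepr : S = ∑ i, b.repr ⟨S, hS⟩ i • (b i).1 := by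
    have := congrArg h.subtype (b.sum_repr ⟨S, hS⟩).symm
    simp only [map_sum, map_smul] at this
    exact this
  rw [hrepr, LinearMap.sum_apply] at hSx
  exact hSx (Submodule.sum_mem _ fun i _ => Submodule.smul_mem _ _ (hspan i))

theorem exists_null_apply_nonneg {C : Module.End ℝ V} (hC : ∀ x y, B (C x) y = B x (C y)) {z : ℂ}
    (hz : quadAt C z = 0) {p : V} (hp : B p p = 0) (hp0 : p ≠ 0) :
    ∃ x ≠ 0, B x x = 0 ∧ 0 ≤ B (C x) x := by
  by_contra! hneg
  set J := C - z.re • 1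
  have hJJ : ∀ x, J (J x) = -(z.im ^ 2) • x := fun x => by
    have := LinearMap.congr_fun hz x
    rw [quadAt, pow_two] at this
    simpa [J, eq_neg_iff_add_eq_zero] using this
  have hJ : ∀ x y, B (J x) y = B x (J y) := fun x y => by simp [J, hC]
  have hCJ : ∀ x, C x = J x + z.re • x := fun x => by simp [J]
  have hJp : B (J p) (J p) = 0 := by rw [hJ, hJJ, map_smul, hp, smul_zero]
  by_cases hJp0 : J p = 0
  · have := hneg p hp0 hp
    simp [hCJ, hJp0, hp] at this
  · have hp_neg := hneg p hp0 hp
    have hJp_neg := hneg (J p) hJp0 hJp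
    simp only [hCJ, hJJ, map_add, map_smul, LinearMap.add_apply, LinearMap.smul_apply, hp, hJp,
      ← hJ p p, smul_eq_mul] at hp_neg hJp_neg
    nlinarith [sq_nonneg z.im]

theorem IsLorentzian.exists_hasEigenvalue_ne_zero [FiniteDimensional ℝ V] (hB : IsLorentzian B)
    {h : LieSubalgebra ℝ (Module.End ℝ V)} (hso : (h : Set (Module.End ℝ V)) ⊆ soSet B)
    (hirr : Irred (h : Set (Module.End ℝ V))) {p : V} (hp : B p p = 0) (hp0 : p ≠ 0) :
    ∃ A ∈ h, ∃ l ≠ 0, A.HasEigenvalue l := by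
  by_contra! hno
  have := hB.nontrivial
  have himag : ∀ A ∈ h, ∀ z ∈ spectrum ℂ (A.baseChange ℂ), z.re = 0 := fun A hA z hz => by
    by_contra hre
    exact hno A hA z.re hre (hB.hasEigenvalue_re (hso hA) hz hre)
  have hβ := hirr.isInnerProduct_neg_traceForm himag
  obtain ⟨b, hb⟩ := hβ.exists_isOrthonormal
  obtain ⟨z, hz⟩ := hirr.exists_quadAt_eq_zero fun S hS =>
    commute_casimir h.incl hβ.symm (lieInvariant_neg_traceForm h) hb ⟨S, hS⟩
  have hself : ∀ x y, B ((∑ i, (b i).1 * (b i).1 : Module.End ℝ V) x) y =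
      B x ((∑ i, (b i).1 * (b i).1 : Module.End ℝ V) y) := fun x y => by
    simp only [LinearMap.sum_apply, map_sum, Module.End.mul_apply,
      apply_left_of_mem_soSet (hso (b _).2), neg_neg]
  obtain ⟨x, hx0, hx, hCx⟩ := exists_null_apply_nonneg hself hz hp hp0
  exact hCx.not_gt (hB.casimir_neg hso hirr b hx hx0)

end Hyperbolic

section Normal

variable {E : Type*} [AddCommGroup E] [Module ℝ E] {β : LinearMap.BilinForm ℝ E}

theorem IsOrthonormal.apply_self_sub_sum {ι : Type*} [Fintype ι] [DecidableEq ι] {b : ι → E}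
    (hb : IsOrthonormal β b) (hβ : ∀ x y, β x y = β y x) (y : E) :
    β (y - ∑ j, β (b j) y • b j) (y - ∑ j, β (b j) y • b j) = β y y - ∑ j, β (b j) y ^ 2 := by
  have horth : ∀ i, β (b i) (y - ∑ j, β (b j) y • b j) = 0 := fun i => by
    simp only [map_sub, map_sum, map_smul, hb i _, smul_eq_mul, mul_ite, mul_one, mul_zero,
      Finset.sum_ite_eq, Finset.mem_univ, if_true, sub_self]
  calc β (y - ∑ j, β (b j) y • b j) (y - ∑ j, β (b j) y • b j)
      = β y (y - ∑ j, β (b j) y • b j) := by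
        rw [map_sub β, LinearMap.sub_apply, sub_eq_self, map_sum, LinearMap.sum_apply]
        exact Finset.sum_eq_zero fun j _ => by rw [map_smul, LinearMap.smul_apply, horth, smul_zero]
    _ = β y y - ∑ j, β (b j) y ^ 2 := by
        simp only [map_sub, map_sum, map_smul, smul_eq_mul, hβ y (b _), sq]

variable {A A' : Module.End ℝ E}

theorem IsInnerProduct.apply_mem_of_adjoint_of_commute [FiniteDimensional ℝ E]
    (hβ : IsInnerProduct β) (hadj : ∀ x y, β (A x) y = β x (A' y)) (hcomm : Commute A A')
    {W : Submodule ℝ E} (hW : ∀ x ∈ W, A x ∈ W) {x : E} (hx : x ∈ W) : A' x ∈ W := by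
  obtain ⟨b, hb⟩ := (hβ.restrict W).exists_isOrthonormal
  let e : Fin (finrank ℝ W) → E := fun j => b j
  have he : IsOrthonormal β e := hb
  let P : E → E := fun y => ∑ j, β (e j) y • e j
  have hP_mem : ∀ y, P y ∈ W := fun y =>
    W.sum_mem fun j _ => W.smul_mem _ (b j).2
  have hP_of_mem : ∀ y ∈ W, P y = y := fun y hy => by
    have := congrArg W.subtype (hb.sum_apply_smul ⟨y, hy⟩)
    simp only [map_sum, map_smul] at this
    exact this
  have hnorm : ∀ y, β (A' y) (A' y) = β (A y) (A y) := fun y => by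
    have h := LinearMap.congr_fun hcomm.eq y
    rw [Module.End.mul_apply, Module.End.mul_apply] at h
    rw [← hadj, h, hβ.symm, ← hadj]
  have hA : ∀ j, β (A (e j)) (A (e j)) = ∑ i, β (e i) (A (e j)) ^ 2 := fun j => by
    have hP : A (e j) - P (A (e j)) = 0 := sub_eq_zero.2 (hP_of_mem _ (hW _ (b j).2)).symm
    rw [← sub_eq_zero, ← he.apply_self_sub_sum hβ.symm, hP, map_zero]
  -- Since `‖A' y‖ = ‖A y‖`, the total distance of the vectors `A' (e j)` from `W` is zero.
  have hsum : ∑ j, β (A' (e j) - P (A' (e j))) (A' (e j) - P (A' (e j))) = 0 := by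
    simp only [P, he.apply_self_sub_sum hβ.symm, hnorm, hA, Finset.sum_sub_distrib]
    rw [sub_eq_zero, Finset.sum_comm]
    simp only [← hadj, hβ.symm (e _) (A _)]
  have hA'_mem : ∀ j, A' (e j) ∈ W := fun j => by
    have hj := (Finset.sum_eq_zero_iff_of_nonneg fun j _ => hβ.nonneg _).1 hsum j
      (Finset.mem_univ j)
    rw [sub_eq_zero.1 (hβ.eq_zero hj)]
    exact hP_mem _
  rw [← hP_of_mem x hx, map_sum]
  refine W.sum_mem fun j _ => ?_
  rw [map_smul]
  exact W.smul_mem _ (hA'_mem j)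

/-- The Hilbert–Schmidt form `(S, T) ↦ ∑ β (S eₖ) (T eₖ)`; for orthonormal `e` this is the trace of
`S* T`, but no adjoint is needed to write it down. -/
def hilbertSchmidt (β : LinearMap.BilinForm ℝ E) {ι : Type*} [Fintype ι] (e : ι → E) :
    LinearMap.BilinForm ℝ (Module.End ℝ E) :=
  ∑ k, β.compl₁₂ (LinearMap.applyₗ (e k)) (LinearMap.applyₗ (e k))

theorem hilbertSchmidt_apply {ι : Type*} [Fintype ι] (e : ι → E) (S T : Module.End ℝ E) :
    hilbertSchmidt β e S T = ∑ k, β (S (e k)) (T (e k)) := by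
  simp [hilbertSchmidt, LinearMap.sum_apply]

theorem IsInnerProduct.hilbertSchmidt (hβ : IsInnerProduct β) {ι : Type*} [Fintype ι]
    (e : Basis ι ℝ E) : IsInnerProduct (hilbertSchmidt β e) where
  symm S T := by simp only [hilbertSchmidt_apply, hβ.symm (S _)]
  pos S hS := by
    rw [hilbertSchmidt_apply]
    refine (Finset.sum_nonneg fun k _ => hβ.nonneg _).lt_of_ne' fun hzero => hS (e.ext fun k => ?_)
    exact hβ.eq_zero <|
      (Finset.sum_eq_zero_iff_of_nonneg fun k _ => hβ.nonneg _).1 hzero k (Finset.mem_univ k)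

theorem IsInnerProduct.lie_mem_of_adjoint_of_commute [FiniteDimensional ℝ E]
    (hβ : IsInnerProduct β) (hadj : ∀ x y, β (A x) y = β x (A' y)) (hcomm : Commute A A')
    {W : Submodule ℝ (Module.End ℝ E)} (hW : ∀ S ∈ W, ⁅A, S⁆ ∈ W) {S : Module.End ℝ E}
    (hS : S ∈ W) : ⁅A', S⁆ ∈ W := by
  obtain ⟨e, he⟩ := hβ.exists_isOrthonormal
  have had : Commute (LieAlgebra.ad ℝ (Module.End ℝ E) A)
      (LieAlgebra.ad ℝ (Module.End ℝ E) A') := by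
    rw [commute_iff_lie_eq, ← LieHom.map_lie, hcomm.lie_eq, map_zero]
  refine (hβ.hilbertSchmidt e).apply_mem_of_adjoint_of_commute (fun S T => ?_) had hW hS
  have hright : ∑ k, β (S (A (e k))) (T (e k)) = ∑ k, β (S (e k)) (T (A' (e k))) :=
    he.sum_adjoint hβ.symm hadj (β.compl₁₂ S T)
  simp only [hilbertSchmidt_apply, LieAlgebra.ad_apply, Ring.lie_def, LinearMap.sub_apply,
    Module.End.mul_apply, map_sub, hadj, hright]

end Normal

section Wedge

variable {B : LinearMap.BilinForm ℝ V}

theorem wedge_apply (B : LinearMap.BilinForm ℝ V) (X Y Z : V) :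
    wedge B X Y Z = B X Z • Y - B Y Z • X := rfl

theorem wedge_mem_soSet (hsymm : ∀ x y, B x y = B y x) (X Y : V) : wedge B X Y ∈ soSet B := by
  intro x y
  simp only [wedge_apply, map_sub, map_smul, LinearMap.sub_apply, LinearMap.smul_apply, smul_eq_mul,
    hsymm x X, hsymm x Y]
  ring

theorem wedge_swap (B : LinearMap.BilinForm ℝ V) (X Y : V) : wedge B Y X = -wedge B X Y := by
  ext z
  simp only [wedge_apply, LinearMap.neg_apply]
  module

theorem wedge_self (B : LinearMap.BilinForm ℝ V) (X : V) : wedge B X X = 0 := by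
  ext z
  simp only [wedge_apply, LinearMap.zero_apply, sub_self]

theorem wedge_add_right (B : LinearMap.BilinForm ℝ V) (X Y Z : V) :
    wedge B X (Y + Z) = wedge B X Y + wedge B X Z := by
  ext z
  simp only [wedge_apply, LinearMap.add_apply, map_add]
  module

theorem wedge_smul_right (B : LinearMap.BilinForm ℝ V) (c : ℝ) (X Y : V) :
    wedge B X (c • Y) = c • wedge B X Y := by
  ext z
  simp only [wedge_apply, LinearMap.smul_apply, map_smul, smul_eq_mul]
  module

theorem wedge_add_left (B : LinearMap.BilinForm ℝ V) (X Y Z : V) :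
    wedge B (X + Y) Z = wedge B X Z + wedge B Y Z := by
  rw [wedge_swap, wedge_add_right, neg_add, ← wedge_swap, ← wedge_swap]

theorem wedge_smul_left (B : LinearMap.BilinForm ℝ V) (c : ℝ) (X Y : V) :
    wedge B (c • X) Y = c • wedge B X Y := by
  rw [wedge_swap, wedge_smul_right, ← smul_neg, ← wedge_swap]

/-- `wedge` as a bilinear map. -/
def wedgeHom (B : LinearMap.BilinForm ℝ V) : V →ₗ[ℝ] V →ₗ[ℝ] Module.End ℝ V :=
  LinearMap.mk₂ ℝ (wedge B) (wedge_add_left B) (wedge_smul_left B) (wedge_add_right B)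
    (wedge_smul_right B)

theorem lie_wedge {S : Module.End ℝ V} (hS : S ∈ soSet B) (X Y : V) :
    ⁅S, wedge B X Y⁆ = wedge B (S X) Y + wedge B X (S Y) := by
  ext z
  simp only [Ring.lie_def, wedge_apply, LinearMap.add_apply, LinearMap.sub_apply,
    Module.End.mul_apply, map_sub, map_smul, apply_left_of_mem_soSet hS]
  module

theorem IsLorentzian.mem_of_forall_wedge_mem [FiniteDimensional ℝ V] (hB : IsLorentzian B)
    {G : Submodule ℝ (Module.End ℝ V)} (hG : ∀ X Y, wedge B X Y ∈ G) {S : Module.End ℝ V}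
    (hS : S ∈ soSet B) : S ∈ G := by
  let b := Module.finBasis ℝ V
  let d := B.dualBasis hB.nondegenerate b
  have hd : ∀ Z, ∑ i, B Z (b i) • d i = Z := fun Z => by
    simpa [d, LinearMap.BilinForm.dualBasis_repr_apply] using d.sum_repr Z
  have hb : ∀ Z, ∑ i, B (d i) Z • b i = Z := fun Z => by
    have hrepr : ∀ i, B (d i) Z = b.repr Z i := fun i => by
      conv_lhs => rw [← b.sum_repr Z]
      simp only [map_sum, map_smul, d, LinearMap.BilinForm.apply_dualBasis_left, smul_eq_mul,
        mul_ite, mul_one, mul_zero, Finset.sum_ite_eq', Finset.mem_univ, if_true]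
    simp only [hrepr, b.sum_repr]
  have hleft : ∀ Z, ∑ i, B (d i) Z • S (b i) = S Z := fun Z => by
    conv_rhs => rw [← hb Z]
    simp only [map_sum, map_smul]
  have hright : ∀ Z, ∑ i, B (S (b i)) Z • d i = -S Z := fun Z => by
    have hskew : ∀ i, B (S (b i)) Z = -B (S Z) (b i) := fun i => by
      rw [apply_left_of_mem_soSet hS, hB.symm]
    simp only [hskew, neg_smul, Finset.sum_neg_distrib, hd]
  have hSsum : S = (1 / 2 : ℝ) • ∑ i, wedge B (d i) (S (b i)) := by
    ext Z
    simp only [LinearMap.smul_apply, LinearMap.sum_apply, wedge_apply, Finset.sum_sub_distrib,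
      hleft, hright]
    module
  rw [hSsum]
  exact G.smul_mem _ (G.sum_mem fun i _ => hG _ _)

theorem IsLorentzian.soSet_subset_of_forall_wedge_mem [FiniteDimensional ℝ V]
    (hB : IsLorentzian B) {h : Set (Module.End ℝ V)} (hso : h ⊆ soSet B) (hirr : Irred h)
    {G : Submodule ℝ (Module.End ℝ V)} (hG : ∀ S ∈ h, ∀ T ∈ G, ⁅S, T⁆ ∈ G) {p : V} (hp : p ≠ 0)
    (hpG : ∀ v, wedge B p v ∈ G) : soSet B ⊆ G := by
  let I : Submodule ℝ V := ⨅ w, G.comap ((wedgeHom B).flip w)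
  have hmem : ∀ v, v ∈ I ↔ ∀ w, wedge B v w ∈ G := fun v => Submodule.mem_iInf _
  have hI : Invariant h I := fun S hS v hv => (hmem _).2 fun w => by
    rw [eq_sub_of_add_eq (lie_wedge (hso hS) v w).symm]
    exact G.sub_mem (hG S hS _ ((hmem v).1 hv w)) ((hmem v).1 hv (S w))
  rcases hirr I hI with hbot | htop
  · exact absurd ((Submodule.mem_bot ℝ).1 (hbot ▸ (hmem p).2 hpG)) hp
  · exact fun S hS => hB.mem_of_forall_wedge_mem
      (fun X => (hmem X).1 (htop ▸ Submodule.mem_top)) hS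

end Wedge

section Witt

variable {B : LinearMap.BilinForm ℝ V} {p q x y : V}

/-- `p, q` is a Witt pair: two null vectors with `B p q = 1`. -/
structure IsWittPair (B : LinearMap.BilinForm ℝ V) (p q : V) : Prop where
  left : B p p = 0
  right : B q q = 0
  pairing : B p q = 1

theorem IsLorentzian.swap_isWittPair (hB : IsLorentzian B) (H : IsWittPair B p q) :
    IsWittPair B q p :=
  ⟨H.right, H.left, (hB.symm q p).trans H.pairing⟩

theorem IsWittPair.left_ne_zero (H : IsWittPair B p q) : p ≠ 0 := by
  rintro rfl
  simpa using H.pairing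

theorem IsLorentzian.pos_of_orthogonal_isWittPair (hB : IsLorentzian B) (H : IsWittPair B p q)
    (hpx : B p x = 0) (hqx : B q x = 0) (hx : x ≠ 0) : 0 < B x x := by
  refine hB.pos_of_timelike_orthogonal (v := p - q) ?_ ?_ hx
  · simp only [map_sub, LinearMap.sub_apply, H.left, H.right, H.pairing, hB.symm q p]
    norm_num
  · rw [map_sub, LinearMap.sub_apply, hpx, hqx, sub_zero]

theorem IsLorentzian.isNull_of_apply_eq_smul (hB : IsLorentzian B) {A : Module.End ℝ V}
    (hA : A ∈ soSet B) {l : ℝ} (hl : l ≠ 0) (hAx : A x = l • x) : B x x = 0 := by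
  have h := apply_self_of_mem_soSet hB.symm hA x
  simpa [hAx, hl] using h

theorem IsLorentzian.exists_isWittPair_of_hasEigenvalue [FiniteDimensional ℝ V]
    (hB : IsLorentzian B) {A : Module.End ℝ V} (hA : A ∈ soSet B) {l : ℝ} (hl : l ≠ 0)
    (hAl : A.HasEigenvalue l) : ∃ p q, IsWittPair B p q ∧ A p = l • p ∧ A q = -l • q := by
  obtain ⟨p, hp⟩ := hAl.exists_hasEigenvector
  have hAp : A p = l • p := hp.apply_eq_smul
  have hrange : LinearMap.range (A + l • (1 : Module.End ℝ V)) ≠ ⊤ := fun htop => by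
    refine hp.2 (hB.nondegenerate.1 p fun z => ?_)
    obtain ⟨x, rfl⟩ := LinearMap.range_eq_top.1 htop z
    have h := apply_left_of_mem_soSet hA p x
    rw [hAp, map_smul, LinearMap.smul_apply, smul_eq_mul] at h
    simp [h]
  obtain ⟨q, hq, hq0⟩ := Submodule.exists_mem_ne_zero_of_ne_bot
    (mt LinearMap.ker_eq_bot_iff_range_eq_top.1 hrange)
  have hAq : A q = -l • q := by
    rw [neg_smul]
    exact eq_neg_of_add_eq_zero_left (by simpa using hq)
  have hpp := hB.isNull_of_apply_eq_smul hA hl hAp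
  have hqq := hB.isNull_of_apply_eq_smul hA (neg_ne_zero.2 hl) hAq
  have hpq : B p q ≠ 0 := fun hpq => by
    obtain ⟨c, rfl⟩ := hB.exists_eq_smul hpp.le hqq.le hpq hp.2
    rw [map_smul, hAp, smul_comm, ← sub_eq_zero, ← sub_smul] at hAq
    exact (smul_ne_zero (by simpa using hl) hq0) hAq
  refine ⟨p, (B p q)⁻¹ • q, ⟨hpp, by simp [hqq], by simp [hpq]⟩, hAp, ?_⟩
  rw [map_smul, hAq, smul_comm]

end Witt

section Euclidean

variable {B : LinearMap.BilinForm ℝ V} {p q : V}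

theorem IsLorentzian.isInnerProduct_add_linMulLin (hB : IsLorentzian B) {v : V}
    (hv : B v v = -2) :
    IsInnerProduct (B + LinearMap.BilinForm.linMulLin (B v) (B v)) where
  symm x y := by
    simp only [LinearMap.add_apply, LinearMap.BilinForm.linMulLin_apply, hB.symm x y]
    ring
  pos x hx := by
    have hw : B v (x + (B v x / 2) • v) = 0 := by
      rw [map_add, map_smul, hv, smul_eq_mul]
      ring
    have hww : B (x + (B v x / 2) • v) (x + (B v x / 2) • v) = B x x + B v x ^ 2 / 2 := by
      simp only [map_add, map_smul, LinearMap.add_apply, LinearMap.smul_apply, smul_eq_mul, hv,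
        hB.symm x v]
      ring
    simp only [LinearMap.add_apply, LinearMap.BilinForm.linMulLin_apply]
    rcases eq_or_ne (B v x) 0 with h0 | h0
    · have := hB.pos_of_timelike_orthogonal (by rw [hv]; norm_num) h0 hx
      simpa [h0] using this
    · have hnonneg := hB.nonneg_of_causal_orthogonal (by rw [hv]; norm_num)
        (by rintro rfl; simp at hv) hw
      have := pow_pos (abs_pos.2 h0) 2
      rw [sq_abs] at this
      nlinarith

theorem IsLorentzian.lie_wedge_mem_of_hasEigenvalue [FiniteDimensional ℝ V] (hB : IsLorentzian B)
    (H : IsWittPair B p q) {A : Module.End ℝ V} (hA : A ∈ soSet B) {l : ℝ} (hl : l ≠ 0)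
    (hAp : A p = l • p) (hAq : A q = -l • q) {W : Submodule ℝ (Module.End ℝ V)}
    (hW : ∀ S ∈ W, ⁅A, S⁆ ∈ W) {S : Module.End ℝ V} (hS : S ∈ W) : ⁅wedge B p q, S⁆ ∈ W := by
  have hβ := hB.isInnerProduct_add_linMulLin (v := p - q) <| by
    simp only [map_sub, LinearMap.sub_apply, H.left, H.right, H.pairing, hB.symm q p]
    norm_num
  -- The inner product is `B` with the sign of the timelike direction `p - q` reversed.
  have hadj : ∀ x y, (B + LinearMap.BilinForm.linMulLin (B (p - q)) (B (p - q))) (A x) y =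
      (B + LinearMap.BilinForm.linMulLin (B (p - q)) (B (p - q))) x
        ((-A - (2 * l) • wedge B p q) y) := fun x y => by
    have hpA : ∀ z, B p (A z) = -(l * B p z) := fun z => by
      rw [← neg_eq_iff_eq_neg, ← apply_left_of_mem_soSet hA, hAp]; simp
    have hqA : ∀ z, B q (A z) = l * B q z := fun z => by
      rw [← neg_inj, ← apply_left_of_mem_soSet hA, hAq]; simp
    simp only [LinearMap.add_apply, LinearMap.BilinForm.linMulLin_apply, LinearMap.sub_apply,
      LinearMap.neg_apply, LinearMap.smul_apply, wedge_apply, map_sub, map_neg, map_smul,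
      smul_eq_mul, hpA, hqA, apply_left_of_mem_soSet hA, H.left, H.right, H.pairing, hB.symm q p,
      hB.symm x p, hB.symm x q]
    ring
  have hcomm : Commute A (wedge B p q) := by
    rw [commute_iff_lie_eq, lie_wedge hA, hAp, hAq, wedge_smul_left, wedge_smul_right, neg_smul,
      add_neg_cancel]
  have hadj_mem := hβ.lie_mem_of_adjoint_of_commute hadj
    (((Commute.refl A).neg_right).sub_right (hcomm.smul_right _)) hW hS
  rw [sub_lie, neg_lie, smul_lie] at hadj_mem
  have h := W.neg_mem (W.add_mem hadj_mem (hW S hS))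
  rwa [show -(-⁅A, S⁆ - (2 * l) • ⁅wedge B p q, S⁆ + ⁅A, S⁆) = (2 * l) • ⁅wedge B p q, S⁆ by module,
    W.smul_mem_iff (mul_ne_zero two_ne_zero hl)] at h

end Euclidean

section Grading

variable {B : LinearMap.BilinForm ℝ V} {p q x y : V}

/-- The projection onto the orthogonal complement of a Witt pair `p, q`. -/
def wittProj (B : LinearMap.BilinForm ℝ V) (p q : V) : Module.End ℝ V :=
  1 - (B q).smulRight p - (B p).smulRight q

theorem wittProj_apply (B : LinearMap.BilinForm ℝ V) (p q x : V) :
    wittProj B p q x = x - B q x • p - B p x • q := rfl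

theorem wittProj_add_smul_add_smul (B : LinearMap.BilinForm ℝ V) (p q x : V) :
    wittProj B p q x + B q x • p + B p x • q = x := by
  rw [wittProj_apply]
  abel

theorem wittProj_swap (B : LinearMap.BilinForm ℝ V) (p q : V) :
    wittProj B q p = wittProj B p q :=
  sub_right_comm _ _ _

theorem IsWittPair.wittProj_left (hB : IsLorentzian B) (H : IsWittPair B p q) :
    wittProj B p q p = 0 := by
  simp [wittProj_apply, hB.symm q p, H.left, H.pairing]

theorem IsWittPair.apply_left_wittProj (H : IsWittPair B p q) (x : V) :
    B p (wittProj B p q x) = 0 := by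
  simp [wittProj_apply, H.left, H.pairing]

theorem IsWittPair.apply_right_wittProj (hB : IsLorentzian B) (H : IsWittPair B p q) (x : V) :
    B q (wittProj B p q x) = 0 := by
  rw [← wittProj_swap, (hB.swap_isWittPair H).apply_left_wittProj]

theorem lie_wedge_wedge_left (hB : IsLorentzian B) (H : IsWittPair B p q) (hpx : B p x = 0)
    (hqx : B q x = 0) : ⁅wedge B p q, wedge B p x⁆ = -wedge B p x := by
  have hp : wedge B p q p = (-1 : ℝ) • p := by
    simp [wedge_apply, H.left, hB.symm q p, H.pairing]
  have hx : wedge B p q x = (0 : ℝ) • x := by simp [wedge_apply, hpx, hqx]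
  rw [lie_wedge (wedge_mem_soSet hB.symm p q), hp, hx, wedge_smul_left, wedge_smul_right]
  module

theorem lie_wedge_wedge_right (hB : IsLorentzian B) (H : IsWittPair B p q) (hpx : B p x = 0)
    (hqx : B q x = 0) : ⁅wedge B p q, wedge B q x⁆ = wedge B q x := by
  rw [← neg_neg (wedge B p q), ← wedge_swap, neg_lie,
    lie_wedge_wedge_left hB (hB.swap_isWittPair H) hqx hpx, neg_neg]

theorem lie_wedge_eq_wedge_wittProj (hsymm : ∀ x y, B x y = B y x) {S : Module.End ℝ V}
    (hS : S ∈ soSet B) (p q : V) :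
    ⁅wedge B p q, S⁆ = wedge B q (wittProj B p q (S p)) - wedge B p (wittProj B p q (S q)) := by
  have hp := apply_self_of_mem_soSet hsymm hS p
  have hq := apply_self_of_mem_soSet hsymm hS q
  have hpq : B p (S q) = -B q (S p) := by
    rw [← neg_eq_iff_eq_neg, ← apply_left_of_mem_soSet hS, hsymm]
  rw [← lie_skew, lie_wedge hS]
  ext z
  simp only [LinearMap.neg_apply, LinearMap.add_apply, LinearMap.sub_apply, wedge_apply,
    wittProj_apply, map_sub, map_smul, LinearMap.smul_apply, smul_eq_mul, hp, hq, hpq]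
  module

theorem lie_wedge_left_wedge_right (hB : IsLorentzian B) (H : IsWittPair B p q)
    (hqx : B q x = 0) (hpy : B p y = 0) :
    ⁅wedge B p x, wedge B q y⁆ = wedge B x y + B x y • wedge B p q := by
  have hq : wedge B p x q = x := by simp [wedge_apply, H.pairing, hB.symm x q, hqx]
  have hy : wedge B p x y = (-B x y) • p := by simp [wedge_apply, hpy]
  rw [lie_wedge (wedge_mem_soSet hB.symm p x), hq, hy, wedge_smul_right, wedge_swap B p q]
  module

theorem lie_lie_wedge_left_wedge_right (hB : IsLorentzian B) (H : IsWittPair B p q)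
    (hpx : B p x = 0) (hqx : B q x = 0) (hpy : B p y = 0) :
    ⁅⁅wedge B p x, wedge B q y⁆, wedge B p x⁆ =
      B x x • wedge B p y - (2 * B x y) • wedge B p x := by
  rw [lie_wedge_left_wedge_right hB H hqx hpy]
  ext z
  simp only [Ring.lie_def, LinearMap.add_apply, LinearMap.sub_apply, LinearMap.smul_apply,
    Module.End.mul_apply, wedge_apply, map_add, map_sub, map_smul, hB.symm x p, hB.symm x q,
    hB.symm y p, hB.symm q p, hB.symm y x, H.left, H.pairing, hpx, hqx, hpy]
  module

variable {W : Submodule ℝ (Module.End ℝ V)}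

theorem IsWittPair.wedge_wittProj_apply_right_mem (hB : IsLorentzian B) (H : IsWittPair B p q)
    (hso : (W : Set (Module.End ℝ V)) ⊆ soSet B) (hW : ∀ S ∈ W, ⁅wedge B p q, S⁆ ∈ W)
    {S : Module.End ℝ V} (hS : S ∈ W) : wedge B p (wittProj B p q (S q)) ∈ W := by
  have hproj := H.apply_left_wittProj
  have hproj' := H.apply_right_wittProj hB
  have hlie := lie_wedge_eq_wedge_wittProj hB.symm (hso hS) p q
  have hlielie : ⁅wedge B p q, ⁅wedge B p q, S⁆⁆ =
      wedge B q (wittProj B p q (S p)) + wedge B p (wittProj B p q (S q)) := by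
    rw [hlie, lie_sub, lie_wedge_wedge_right hB H (hproj _) (hproj' _),
      lie_wedge_wedge_left hB H (hproj _) (hproj' _), sub_neg_eq_add]
  -- With `D = ad (p ∧ q)`, the wedge in question is `(D² S - D S) / 2`.
  have h := W.sub_mem (hW _ (hW S hS)) (hW S hS)
  rwa [hlielie, hlie, add_sub_sub_cancel, ← two_smul ℝ,
    W.smul_mem_iff (two_ne_zero' ℝ)] at h

end Grading

section Generation

variable {B : LinearMap.BilinForm ℝ V} {p q x y : V} {h : LieSubalgebra ℝ (Module.End ℝ V)}

theorem lie_wedge_swap_mem (hN : ∀ S ∈ h, ⁅wedge B p q, S⁆ ∈ h) :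
    ∀ S ∈ h, ⁅wedge B q p, S⁆ ∈ h := fun S hS => by
  rw [wedge_swap, neg_lie]
  exact h.neg_mem (hN S hS)

theorem IsWittPair.wedge_left_mem_of_wedge_right_mem (hB : IsLorentzian B)
    (H : IsWittPair B p q) (hpx : B p x = 0) (hqx : B q x = 0) (hx : x ≠ 0) (hpy : B p y = 0)
    (hxh : wedge B p x ∈ h) (hyh : wedge B q y ∈ h) : wedge B p y ∈ h := by
  have hxx := (hB.pos_of_orthogonal_isWittPair H hpx hqx hx).ne'
  have hmem := h.add_mem (h.lie_mem (h.lie_mem hxh hyh) hxh) (h.smul_mem (2 * B x y) hxh)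
  rwa [lie_lie_wedge_left_wedge_right hB H hpx hqx hpy, sub_add_cancel,
    ← LieSubalgebra.mem_toSubmodule, h.toSubmodule.smul_mem_iff hxx] at hmem

theorem IsWittPair.exists_wittProj_apply_ne_zero (hB : IsLorentzian B) (H : IsWittPair B p q)
    (hso : (h : Set (Module.End ℝ V)) ⊆ soSet B) (hirr : Irred (h : Set (Module.End ℝ V))) :
    ∃ S ∈ h, wittProj B p q (S q) ≠ 0 := by
  obtain ⟨S, hS, hSq⟩ := hB.exists_apply_notMem_span hirr H.right
    (hB.swap_isWittPair H).left_ne_zero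
  refine ⟨S, hS, fun hproj => hSq (Submodule.mem_span_singleton.2 ⟨B p (S q), ?_⟩)⟩
  rw [wittProj_apply, apply_self_of_mem_soSet hB.symm (hso hS), zero_smul, sub_zero] at hproj
  exact (sub_eq_zero.1 hproj).symm

theorem IsWittPair.wedge_wittProj_apply_left_mem (hB : IsLorentzian B) (H : IsWittPair B p q)
    (hso : (h : Set (Module.End ℝ V)) ⊆ soSet B) (hirr : Irred (h : Set (Module.End ℝ V)))
    (hN : ∀ S ∈ h, ⁅wedge B p q, S⁆ ∈ h) {S : Module.End ℝ V} (hS : S ∈ h) :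
    wedge B p (wittProj B p q (S p)) ∈ h := by
  obtain ⟨T, hT, hTq⟩ := H.exists_wittProj_apply_ne_zero hB hso hirr
  have hTh : wedge B p (wittProj B p q (T q)) ∈ h :=
    H.wedge_wittProj_apply_right_mem (W := h.toSubmodule) hB hso hN hT
  have hSh : wedge B q (wittProj B p q (S p)) ∈ h := by
    rw [← wittProj_swap]
    exact (hB.swap_isWittPair H).wedge_wittProj_apply_right_mem (W := h.toSubmodule) hB hso
      (lie_wedge_swap_mem hN) hS
  exact H.wedge_left_mem_of_wedge_right_mem hB (H.apply_left_wittProj _)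
    (H.apply_right_wittProj hB _) hTq (H.apply_left_wittProj _) hTh hSh

theorem IsWittPair.wedge_wittProj_apply_mem (hB : IsLorentzian B) (H : IsWittPair B p q)
    (hso : (h : Set (Module.End ℝ V)) ⊆ soSet B) (hN : ∀ S ∈ h, ⁅wedge B p q, S⁆ ∈ h)
    {S : Module.End ℝ V} (hS : S ∈ h) (hpx : B p x = 0) (hqx : B q x = 0)
    (hx : wedge B p x ∈ h) : wedge B p (wittProj B p q (S x)) ∈ h := by
  have hmem : wedge B p (wittProj B p q (⁅S, wedge B p x⁆ q)) ∈ h :=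
    H.wedge_wittProj_apply_right_mem (W := h.toSubmodule) hB hso hN (h.lie_mem hS hx)
  have hproj : wittProj B p q (S x) =
      wittProj B p q (⁅S, wedge B p x⁆ q) + B p (S q) • x := by
    have hxx : wittProj B p q x = x := by simp [wittProj_apply, hpx, hqx]
    simp only [Ring.lie_def, LinearMap.sub_apply, Module.End.mul_apply, wedge_apply, map_sub,
      map_smul, H.pairing, hB.symm x q, hqx, hxx, H.wittProj_left hB]
    module
  rw [hproj, wedge_add_right, wedge_smul_right]
  exact h.add_mem hmem (h.smul_mem _ hx)

theorem IsWittPair.wedge_wittProj_mem (hB : IsLorentzian B) (H : IsWittPair B p q)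
    (hso : (h : Set (Module.End ℝ V)) ⊆ soSet B) (hirr : Irred (h : Set (Module.End ℝ V)))
    (hN : ∀ S ∈ h, ⁅wedge B p q, S⁆ ∈ h) (v : V) : wedge B p (wittProj B p q v) ∈ h := by
  let U : Submodule ℝ V := h.toSubmodule.comap ((wedgeHom B p).comp (wittProj B p q))
  have hp : p ∈ U := by
    change (wedgeHom B p) (wittProj B p q p) ∈ h
    rw [H.wittProj_left hB, map_zero]
    exact h.zero_mem
  have hU : Invariant (h : Set (Module.End ℝ V)) U := fun S hS v hv => by
    have hperp : S (wittProj B p q v) ∈ U := H.wedge_wittProj_apply_mem hB hso hN hS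
      (H.apply_left_wittProj v) (H.apply_right_wittProj hB v) hv
    have hleft : S p ∈ U := H.wedge_wittProj_apply_left_mem hB hso hirr hN hS
    have hright : S q ∈ U :=
      H.wedge_wittProj_apply_right_mem (W := h.toSubmodule) hB hso hN hS
    rw [← wittProj_add_smul_add_smul B p q v, map_add, map_add, map_smul, map_smul]
    exact U.add_mem (U.add_mem hperp (U.smul_mem _ hleft)) (U.smul_mem _ hright)
  rcases hirr U hU with hbot | htop
  · exact absurd ((Submodule.mem_bot ℝ).1 (hbot ▸ hp)) H.left_ne_zero
  · exact (htop ▸ Submodule.mem_top : v ∈ U)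

theorem IsWittPair.wedge_mem_of_forall_lie_mem (hB : IsLorentzian B) (H : IsWittPair B p q)
    (hso : (h : Set (Module.End ℝ V)) ⊆ soSet B) (hirr : Irred (h : Set (Module.End ℝ V)))
    (hN : ∀ S ∈ h, ⁅wedge B p q, S⁆ ∈ h) {G : Submodule ℝ (Module.End ℝ V)}
    (hG : ∀ S ∈ h, ∀ T ∈ h, ⁅S, T⁆ ∈ G) : wedge B p q ∈ G := by
  obtain ⟨T, -, hx⟩ := H.exists_wittProj_apply_ne_zero hB hso hirr
  set x := wittProj B p q (T q) with hx_def
  have hpx : B p x = 0 := H.apply_left_wittProj _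
  have hqx : B q x = 0 := H.apply_right_wittProj hB _
  have hp : wedge B p x ∈ h := H.wedge_wittProj_mem hB hso hirr hN _
  have hq : wedge B q x ∈ h := by
    rw [hx_def, ← wittProj_swap]
    exact (hB.swap_isWittPair H).wedge_wittProj_mem hB hso hirr (lie_wedge_swap_mem hN) _
  have hlie : ⁅wedge B p x, wedge B q x⁆ = B x x • wedge B p q := by
    rw [lie_wedge_left_wedge_right hB H hqx hpx, wedge_self, zero_add]
  rw [← G.smul_mem_iff (hB.pos_of_orthogonal_isWittPair H hpx hqx hx).ne', ← hlie]
  exact hG _ hp _ hq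

theorem IsWittPair.forall_wedge_mem_of_forall_lie_mem (hB : IsLorentzian B)
    (H : IsWittPair B p q) (hso : (h : Set (Module.End ℝ V)) ⊆ soSet B)
    (hirr : Irred (h : Set (Module.End ℝ V))) (hN : ∀ S ∈ h, ⁅wedge B p q, S⁆ ∈ h)
    {G : Submodule ℝ (Module.End ℝ V)} (hG : ∀ S ∈ h, ∀ T ∈ h, ⁅S, T⁆ ∈ G) (v : V) :
    wedge B p v ∈ G := by
  have hpq : wedge B p q ∈ h :=
    H.wedge_mem_of_forall_lie_mem (G := h.toSubmodule) hB hso hirr hN fun _ hS _ hT =>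
      h.lie_mem hS hT
  have hproj : wedge B p (wittProj B p q v) ∈ G := by
    rw [← neg_mem_iff, ← lie_wedge_wedge_left hB H (H.apply_left_wittProj v)
      (H.apply_right_wittProj hB v)]
    exact hG _ hpq _ (H.wedge_wittProj_mem hB hso hirr hN v)
  rw [← wittProj_add_smul_add_smul B p q v, wedge_add_right, wedge_add_right,
    wedge_smul_right, wedge_smul_right, wedge_self, smul_zero, add_zero]
  exact G.add_mem hproj (G.smul_mem _ (H.wedge_mem_of_forall_lie_mem hB hso hirr hN hG))

theorem IsLorentzian.exists_null (hB : IsLorentzian B) {S : Module.End ℝ V} (hS : S ∈ soSet B)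
    (hS0 : S ≠ 0) : ∃ p ≠ 0, B p p = 0 := by
  obtain ⟨t, ht, hpos⟩ := hB.exists_timelike
  obtain ⟨w, htw, hw⟩ : ∃ w, B t w = 0 ∧ w ≠ 0 := by
    by_cases hSt : S t = 0
    · obtain ⟨x, hx⟩ := DFunLike.ne_iff.1 hS0
      refine ⟨S x, ?_, hx⟩
      rw [← neg_eq_zero, ← apply_left_of_mem_soSet hS, hSt, map_zero, LinearMap.zero_apply]
    · exact ⟨S t, apply_self_of_mem_soSet hB.symm hS t, hSt⟩
  have hww := hpos w htw hw
  refine ⟨√(B w w) • t + √(-B t t) • w, fun h0 => ?_, ?_⟩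
  · have := congrArg (B t) h0
    simp [htw, ht.ne, (Real.sqrt_pos.2 hww).ne'] at this
  · simp only [map_add, map_smul, LinearMap.add_apply, LinearMap.smul_apply, smul_eq_mul, htw,
      hB.symm w t]
    linear_combination B t t * Real.mul_self_sqrt hww.le +
      B w w * Real.mul_self_sqrt (neg_nonneg.2 ht.le)

theorem IsLorentzian.soSet_subset_of_forall_lie_mem [FiniteDimensional ℝ V]
    (hB : IsLorentzian B) (hso : (h : Set (Module.End ℝ V)) ⊆ soSet B)
    (hirr : Irred (h : Set (Module.End ℝ V))) {G : Submodule ℝ (Module.End ℝ V)}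
    (hG : ∀ S ∈ h, ∀ T ∈ h, ⁅S, T⁆ ∈ G) : soSet B ⊆ G := by
  intro S hS
  rcases eq_or_ne S 0 with rfl | hS0
  · exact G.zero_mem
  obtain ⟨p₀, hp₀, hnull⟩ := hB.exists_null hS hS0
  obtain ⟨A, hA, l, hl, hAl⟩ := hB.exists_hasEigenvalue_ne_zero hso hirr hnull hp₀
  obtain ⟨p, q, H, hAp, hAq⟩ := hB.exists_isWittPair_of_hasEigenvalue (hso hA) hl hAl
  have hN : ∀ S ∈ h, ⁅wedge B p q, S⁆ ∈ h := fun S hS =>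
    hB.lie_wedge_mem_of_hasEigenvalue (W := h.toSubmodule) H (hso hA) hl hAp hAq
      (fun T hT => h.lie_mem hA hT) hS
  have hGh : ∀ S ∈ h, ∀ T ∈ h, ⁅S, T⁆ ∈ G ⊓ h.toSubmodule := fun S hS T hT =>
    ⟨hG S hS T hT, h.lie_mem hS hT⟩
  exact (hB.soSet_subset_of_forall_wedge_mem hso hirr (fun S hS T hT => hGh S hS T hT.2)
    H.left_ne_zero (H.forall_wedge_mem_of_forall_lie_mem hB hso hirr hN hGh) hS).1

end Generation

section Conformal

variable {B : LinearMap.BilinForm ℝ V} {g : Set (Module.End ℝ V)}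

/-- A set satisfying `IsLieSub`, bundled as a submodule. -/
def IsLieSub.toSubmodule (hsub : IsLieSub g) : Submodule ℝ (Module.End ℝ V) where
  carrier := g
  add_mem' hF hF' := hsub.2.1 _ hF _ hF'
  zero_mem' := hsub.1
  smul_mem' c F hF := hsub.2.2.1 c F hF

theorem IsLieSub.lie_mem (hsub : IsLieSub g) {F F' : Module.End ℝ V} (hF : F ∈ g) (hF' : F' ∈ g) :
    ⁅F, F'⁆ ∈ g :=
  hsub.2.2.2 F hF F' hF'

theorem lie_smul_one_add (c d : ℝ) (S T : Module.End ℝ V) :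
    ⁅c • (1 : Module.End ℝ V) + S, d • (1 : Module.End ℝ V) + T⁆ = ⁅S, T⁆ := by
  have hone : ∀ F : Module.End ℝ V, ⁅(1 : Module.End ℝ V), F⁆ = 0 := fun F =>
    (Commute.one_left F).lie_eq
  have hone' : ∀ F : Module.End ℝ V, ⁅F, (1 : Module.End ℝ V)⁆ = 0 := fun F =>
    (Commute.one_right F).lie_eq
  rw [add_lie, lie_add S, smul_lie, hone, lie_smul, hone', smul_zero, smul_zero, zero_add, zero_add]

theorem soSet_eq_skewAdjointLieSubalgebra (B : LinearMap.BilinForm ℝ V) :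
    soSet B = skewAdjointLieSubalgebra B := by
  ext S
  exact forall₂_congr fun x y => add_eq_zero_iff_eq_neg

/-- The projection of `g ∩ co(B)` to `so(B)`: the skew endomorphisms which lie in `g` up to a
homothety. -/
def IsLieSub.skewPart (hsub : IsLieSub g) (B : LinearMap.BilinForm ℝ V) :
    LieSubalgebra ℝ (Module.End ℝ V) where
  carrier := {S | S ∈ skewAdjointLieSubalgebra B ∧ ∃ c : ℝ, c • (1 : Module.End ℝ V) + S ∈ g}
  add_mem' := fun ⟨hS, c, hc⟩ ⟨hT, d, hd⟩ => ⟨add_mem hS hT, c + d, by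
    rw [add_smul, add_add_add_comm]
    exact hsub.toSubmodule.add_mem hc hd⟩
  zero_mem' := ⟨zero_mem _, 0, by
    rw [zero_smul, zero_add]
    exact hsub.1⟩
  smul_mem' := fun r S ⟨hS, c, hc⟩ => ⟨(skewAdjointLieSubalgebra B).smul_mem r hS, r * c, by
    rw [mul_smul, ← smul_add]
    exact hsub.toSubmodule.smul_mem r hc⟩
  lie_mem' := fun {S T} ⟨hS, c, hc⟩ ⟨hT, d, hd⟩ => ⟨LieSubalgebra.lie_mem _ hS hT, 0, by
    rw [zero_smul, zero_add, ← lie_smul_one_add c d S T]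
    exact hsub.lie_mem hc hd⟩

theorem IsLieSub.skewPart_subset_soSet (hsub : IsLieSub g) :
    (hsub.skewPart B : Set (Module.End ℝ V)) ⊆ soSet B := fun S hS => by
  rw [soSet_eq_skewAdjointLieSubalgebra]
  exact hS.1

theorem IsLieSub.irred_skewPart (hsub : IsLieSub g) (hg : g ⊆ coSet B) (hirr : Irred g) :
    Irred (hsub.skewPart B : Set (Module.End ℝ V)) := by
  refine fun W hW => hirr W fun F hF x hx => ?_
  obtain ⟨c, S, hS, rfl⟩ := hg hF
  rw [soSet_eq_skewAdjointLieSubalgebra] at hS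
  exact W.add_mem (W.smul_mem c hx) (hW S ⟨hS, c, hF⟩ x hx)

theorem IsLorentzian.soSet_subset_of_irred [FiniteDimensional ℝ V] (hB : IsLorentzian B)
    (hsub : IsLieSub g) (hg : g ⊆ coSet B) (hirr : Irred g) : soSet B ⊆ g :=
  hB.soSet_subset_of_forall_lie_mem (G := hsub.toSubmodule) hsub.skewPart_subset_soSet
    (hsub.irred_skewPart hg hirr) fun S ⟨_, c, hc⟩ T ⟨_, d, hd⟩ => by
      rw [← lie_smul_one_add c d S T]
      exact hsub.lie_mem hc hd

theorem irreducible_is_co_general [FiniteDimensional ℝ V] (hB : IsLorentzian B)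
    (hsub : IsLieSub g) (hg : g ⊆ coSet B) (hirr : Irred g) (hnot : ¬ g ⊆ soSet B) :
    g = coSet B := by
  have hso : soSet B ⊆ g := hB.soSet_subset_of_irred hsub hg hirr
  let G := hsub.toSubmodule
  obtain ⟨F, hF, hFso⟩ := Set.not_subset.1 hnot
  obtain ⟨c, S, hS, rfl⟩ := hg hF
  have hc : c ≠ 0 := by
    rintro rfl
    rw [zero_smul, zero_add] at hFso
    exact hFso hS
  have hone : (1 : Module.End ℝ V) ∈ G :=
    (G.smul_mem_iff hc).1 ((G.add_mem_iff_left (hso hS)).1 hF)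
  refine hg.antisymm ?_
  rintro _ ⟨d, T, hT, rfl⟩
  exact G.add_mem (G.smul_mem d hone) (hso hT)

theorem minkB_apply (n : ℕ) (X Y : Mink n) :
    minkB n X Y = X.1 * Y.2.2 + X.2.2 * Y.1 + X.2.1 ⬝ᵥ Y.2.1 := rfl

theorem isLorentzian_minkB (n : ℕ) : IsLorentzian (minkB n) where
  symm X Y := by
    rw [minkB_apply, minkB_apply, dotProduct_comm]
    ring
  exists_timelike := by
    refine ⟨pvec n - qvec n, by simp [minkB_apply, pvec, qvec], ?_⟩
    rintro ⟨a, x, b⟩ horth hne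
    obtain rfl : b = a := by
      simpa [minkB_apply, pvec, qvec, add_neg_eq_zero] using horth
    have hx : 0 ≤ x ⬝ᵥ x := Finset.sum_nonneg fun i _ => mul_self_nonneg (x i)
    change 0 < b * b + b * b + x ⬝ᵥ x
    by_contra! hle
    have hb0 : b = 0 := by nlinarith [mul_self_nonneg b]
    have hx0 : x = 0 := dotProduct_self_eq_zero.1 (by nlinarith [mul_self_nonneg b])
    exact hne (by rw [hb0, hx0]; rfl)

end Conformal

/-- An irreducible subalgebra `𝔤 ⊆ co(1,n+1)` not contained in `so(1,n+1)`
equals `co(1,n+1)`. -/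
theorem irreducible_is_co (n : ℕ) (g : Set (Module.End ℝ (Mink n)))
    (hsub : IsLieSub g) (hg : g ⊆ coSet (minkB n))
    (hirr : Irred g) (hnot : ¬ g ⊆ soSet (minkB n)) :
    g = coSet (minkB n) :=
  irreducible_is_co_general (isLorentzian_minkB n) hsub hg hirr hnot


end Weyl
end
end

section
/- Let 𝔤 ⊆ co(1,n+1) be a weakly irreducible subalgebra not contained in so(1,n+1), and let ḡ := pr_{so(1,n+1)}𝔤 be its projection to so(1,n+1). Then ḡ is weakly irreducible, and exactly one of the following holds: (a) ℝ·id ⊆ 𝔤, in which case 𝔤 = ℝ·id ⊕ ḡ; (b) ℝ·id ⊄ 𝔤, in which case 𝔤 = {θ(B)·id + B : B ∈ ḡ} for a nonzero linear map θ : ḡ → ℝ, and this θ necessarily vanishes on the commutant [ḡ,ḡ]. -/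
open Module

noncomputable section

namespace Weyl

variable {V : Type*} [AddCommGroup V] [Module ℝ V]

/-- The projection `pr_{so(1,n+1)} g` of `g ⊆ co(1,n+1)` to `so(1,n+1)` along `ℝ·id`. -/
def prSO (n : ℕ) (g : Set (Module.End ℝ (Mink n))) : Set (Module.End ℝ (Mink n)) :=
  {S | S ∈ soSet (minkB n) ∧ ∃ c : ℝ, c • (1 : Module.End ℝ (Mink n)) + S ∈ g}

/-! Adding a multiple of the identity to an endomorphism changes neither its invariant subspaces nor
its brackets, so `g` and its projection have the same invariant subspaces. If `id ∉ g`, some linear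
functional `θ` vanishes on `g` and takes the value `-1` at `id`; for `c • id + S ∈ g` this says
`θ S = c`, so `g` is the graph of `θ`. A bracket in `g` is the bracket of the remainders `S`, with
scalar part `0`, hence `θ` kills it. -/

theorem exists_dual_eq_of_smul_add_mem {K M : Type*} [Field K] [AddCommGroup M] [Module K M]
    {p : Submodule K M} {v : M} (hv : v ∉ p) :
    ∃ θ : M →ₗ[K] K, ∀ c x, c • v + x ∈ p → θ x = c := by
  obtain ⟨f, hfv, hfp⟩ := p.exists_le_ker_of_notMem hv
  refine ⟨-(f v)⁻¹ • f, fun c x hx => ?_⟩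
  have hfx : f x = -(c * f v) := by
    have hf0 : f (c • v + x) = 0 := hfp hx
    rw [map_add, map_smul, smul_eq_mul] at hf0
    exact eq_neg_of_add_eq_zero_right hf0
  rw [LinearMap.smul_apply, hfx, smul_eq_mul]
  field_simp

attribute [local instance] LieRing.ofAssociativeRing

section ScalarPart

variable {R A : Type*} [CommRing R] [Ring A] [Algebra R A]

theorem lie_smul_one_add_smul_one_add (c d : R) (a b : A) :
    ⁅c • (1 : A) + a, d • (1 : A) + b⁆ = ⁅a, b⁆ := by
  have hc : ∀ x : A, ⁅c • (1 : A), x⁆ = 0 := fun x => ((Commute.one_left x).smul_left c).lie_eq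
  have hd : ∀ x : A, ⁅x, d • (1 : A)⁆ = 0 := fun x => ((Commute.one_right x).smul_right d).lie_eq
  rw [add_lie, lie_add a, hc, hd, zero_add, zero_add]

/-- The functional `θ` gives the scalar part of each element of `s` in terms of its remaining part:
it is the `θ` in `𝔤 = {θ(B)·id + B}`. It is defined on all of `A`, only its values on the
remaining parts being constrained. -/
def IsScalarPart (s : Set A) (θ : A →ₗ[R] R) : Prop :=
  ∀ c a, c • (1 : A) + a ∈ s → θ a = c

theorem IsScalarPart.map_lie_eq_zero {L : LieSubalgebra R A} {θ : A →ₗ[R] R}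
    (hθ : IsScalarPart (L : Set A) θ) {c d : R} {a b : A}
    (ha : c • (1 : A) + a ∈ L) (hb : d • (1 : A) + b ∈ L) : θ ⁅a, b⁆ = 0 := by
  refine hθ 0 ⁅a, b⁆ ?_
  rw [zero_smul, zero_add, ← lie_smul_one_add_smul_one_add c d]
  exact L.lie_mem ha hb

end ScalarPart

/-- A set of endomorphisms satisfying `IsLieSub`, as a `LieSubalgebra`. -/
def IsLieSub.toLieSubalgebra {g : Set (Module.End ℝ V)} (h : IsLieSub g) :
    LieSubalgebra ℝ (Module.End ℝ V) where
  carrier := g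
  zero_mem' := h.1
  add_mem' hF hF' := h.2.1 _ hF _ hF'
  smul_mem' c _ hF := h.2.2.1 c _ hF
  lie_mem' hF hF' := h.2.2.2 _ hF _ hF'

/-- The projection `pr_{so(B)} g` of `g ⊆ co(B)` to `so(B)` along `ℝ·id`, for an arbitrary
bilinear form `B`; for `B = minkB n` it is `prSO n g`. -/
def soProj (B : LinearMap.BilinForm ℝ V) (g : Set (Module.End ℝ V)) : Set (Module.End ℝ V) :=
  {S | S ∈ soSet B ∧ ∃ c : ℝ, c • (1 : Module.End ℝ V) + S ∈ g}

variable {B : LinearMap.BilinForm ℝ V} {g : Set (Module.End ℝ V)}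

theorem exists_mem_soProj_eq_smul_one_add (hg : g ⊆ coSet B) {F : Module.End ℝ V} (hF : F ∈ g) :
    ∃ c : ℝ, ∃ S ∈ soProj B g, F = c • (1 : Module.End ℝ V) + S := by
  obtain ⟨c, S, hS, rfl⟩ := hg hF
  exact ⟨c, S, ⟨hS, c, hF⟩, rfl⟩

theorem smul_one_add_apply_mem_iff {W : Submodule ℝ V} {x : V} (hx : x ∈ W) (c : ℝ)
    (S : Module.End ℝ V) : (c • (1 : Module.End ℝ V) + S) x ∈ W ↔ S x ∈ W :=
  W.add_mem_iff_right (W.smul_mem c hx)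

theorem invariant_soProj_iff (hg : g ⊆ coSet B) {W : Submodule ℝ V} :
    Invariant (soProj B g) W ↔ Invariant g W := by
  constructor
  · intro hW F hF x hx
    obtain ⟨c, S, hS, rfl⟩ := exists_mem_soProj_eq_smul_one_add hg hF
    exact (smul_one_add_apply_mem_iff hx c S).mpr (hW S hS x hx)
  · rintro hW S ⟨-, c, hF⟩ x hx
    exact (smul_one_add_apply_mem_iff hx c S).mp (hW _ hF x hx)

theorem weaklyIrred_soProj_iff (hg : g ⊆ coSet B) :
    WeaklyIrred B (soProj B g) ↔ WeaklyIrred B g :=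
  forall_congr' fun _ => imp_congr_left (invariant_soProj_iff hg)

theorem eq_smul_one_add_soProj_of_one_mem {p : Submodule ℝ (Module.End ℝ V)}
    (hp : (p : Set (Module.End ℝ V)) ⊆ coSet B) (hone : (1 : Module.End ℝ V) ∈ p) :
    (p : Set (Module.End ℝ V)) =
      {F | ∃ c : ℝ, ∃ S ∈ soProj B p, F = c • (1 : Module.End ℝ V) + S} := by
  refine Set.Subset.antisymm (fun F hF => exists_mem_soProj_eq_smul_one_add hp hF) ?_
  rintro _ ⟨c, S, ⟨-, d, hF⟩, rfl⟩
  have hS : S ∈ p := (p.add_mem_iff_right (p.smul_mem d hone)).mp hF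
  exact p.add_mem (p.smul_mem c hone) hS

namespace IsScalarPart

variable {θ : Module.End ℝ V →ₗ[ℝ] ℝ}

theorem eq_smul_one_add_soProj (hθ : IsScalarPart g θ) (hg : g ⊆ coSet B) :
    g = {F | ∃ S ∈ soProj B g, F = θ S • (1 : Module.End ℝ V) + S} := by
  ext F
  constructor
  · intro hF
    obtain ⟨c, S, hS, rfl⟩ := exists_mem_soProj_eq_smul_one_add hg hF
    exact ⟨S, hS, by rw [hθ c S hF]⟩
  · rintro ⟨S, ⟨-, c, hF⟩, rfl⟩
    rwa [hθ c S hF]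

theorem exists_mem_soProj_ne_zero (hθ : IsScalarPart g θ) (hg : g ⊆ coSet B)
    (hnot : ¬ g ⊆ soSet B) : ∃ S ∈ soProj B g, θ S ≠ 0 := by
  obtain ⟨F, hF, hFso⟩ := Set.not_subset.mp hnot
  obtain ⟨c, S, hS, rfl⟩ := exists_mem_soProj_eq_smul_one_add hg hF
  refine ⟨S, hS, fun hzero => hFso ?_⟩
  obtain rfl : c = 0 := (hθ c S hF).symm.trans hzero
  simpa only [zero_smul, zero_add] using hS.1

end IsScalarPart

theorem weakly_irreducible_dichotomy_general (B : LinearMap.BilinForm ℝ V)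
    (g : Set (Module.End ℝ V)) (hsub : IsLieSub g) (hg : g ⊆ coSet B) (hnot : ¬ g ⊆ soSet B) :
    (WeaklyIrred B (soProj B g) ↔ WeaklyIrred B g) ∧
    (((1 : Module.End ℝ V) ∈ g ∧
        g = {F | ∃ c : ℝ, ∃ S ∈ soProj B g, F = c • (1 : Module.End ℝ V) + S}) ∨
     ((1 : Module.End ℝ V) ∉ g ∧
        ∃ θ : Module.End ℝ V →ₗ[ℝ] ℝ,
          (∃ S ∈ soProj B g, θ S ≠ 0) ∧
          g = {F | ∃ S ∈ soProj B g, F = θ S • (1 : Module.End ℝ V) + S} ∧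
          ∀ S ∈ soProj B g, ∀ S' ∈ soProj B g, θ (S * S' - S' * S) = 0)) := by
  refine ⟨weaklyIrred_soProj_iff hg, ?_⟩
  let 𝔤 := hsub.toLieSubalgebra
  by_cases hone : (1 : Module.End ℝ V) ∈ 𝔤
  · exact Or.inl ⟨hone, eq_smul_one_add_soProj_of_one_mem (p := 𝔤.toSubmodule) hg hone⟩
  · obtain ⟨θ, hθ : IsScalarPart (𝔤 : Set (Module.End ℝ V)) θ⟩ :=
      exists_dual_eq_of_smul_add_mem (p := 𝔤.toSubmodule) hone
    refine Or.inr ⟨hone, θ, hθ.exists_mem_soProj_ne_zero hg hnot,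
      hθ.eq_smul_one_add_soProj hg, ?_⟩
    rintro S ⟨-, c, hS⟩ S' ⟨-, d, hS'⟩
    exact hθ.map_lie_eq_zero (L := 𝔤) hS hS'

/-- Let `𝔤 ⊆ co(1,n+1)` be weakly irreducible and not contained in
`so(1,n+1)`, and let `ḡ = pr_{so(1,n+1)} 𝔤`.  Then `ḡ` is weakly irreducible
and exactly one of the following holds: (a) `id ∈ 𝔤` and `𝔤 = ℝ·id ⊕ ḡ`;
(b) `id ∉ 𝔤` and `𝔤 = {θ(B)·id + B : B ∈ ḡ}` for a nonzero linear map
`θ : ḡ → ℝ` vanishing on the commutant `[ḡ, ḡ]`. -/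
theorem weakly_irreducible_dichotomy (n : ℕ) (g : Set (Module.End ℝ (Mink n)))
    (hsub : IsLieSub g) (hg : g ⊆ coSet (minkB n))
    (hwi : WeaklyIrred (minkB n) g) (hnot : ¬ g ⊆ soSet (minkB n)) :
    WeaklyIrred (minkB n) (prSO n g) ∧
    (((1 : Module.End ℝ (Mink n)) ∈ g ∧
        g = {F | ∃ c : ℝ, ∃ S ∈ prSO n g,
          F = c • (1 : Module.End ℝ (Mink n)) + S}) ∨
     ((1 : Module.End ℝ (Mink n)) ∉ g ∧
        ∃ θ : Module.End ℝ (Mink n) →ₗ[ℝ] ℝ,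
          (∃ S ∈ prSO n g, θ S ≠ 0) ∧
          g = {F | ∃ S ∈ prSO n g, F = θ S • (1 : Module.End ℝ (Mink n)) + S} ∧
          ∀ S ∈ prSO n g, ∀ S' ∈ prSO n g, θ (S * S' - S' * S) = 0)) := by
  obtain ⟨hirred, hdichotomy⟩ := weakly_irreducible_dichotomy_general (minkB n) g hsub hg hnot
  exact ⟨hirred.mpr hwi, hdichotomy⟩

end Weyl
end
end
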